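/- arXiv:2006.12082 — 2 statements merged into one kernel-verified Lean document; each statement's English description precedes it below -/
import Mathlib

section
/- If for ν-almost every x ∈ Σ the lower local dimension of ν at x is strictly less than h_X, then ν is Q-singular. In particular this holds if the upper Hausdorff dimension dim̄_H(ν) < h_X. -/
open MeasureTheory ProbabilityTheory Filter Set
open scoped ENNReal

noncomputable section

/-- The one-sided symbolic space over the alphabet `{0, …, b-1}`. -/
abbrev SymbSpace (b : ℕ) : Type := ℕ → Fin b

/-- The cylinder `[w]` of sequences starting with the finite word `w`. -/
def cylinder {b : ℕ} (w : List (Fin b)) : Set (SymbSpace b) :=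
  {x | ∀ i : Fin w.length, x i = w.get i}

/-- The prefix `x|_n` of `x` of length `n`, as a finite word. -/
def wordPrefix {b : ℕ} (x : SymbSpace b) (n : ℕ) : List (Fin b) :=
  List.ofFn (fun i : Fin n => x i)

/-- `Y_w = X_{w_1} X_{w_1w_2} ⋯ X_{w_1⋯w_n}`. -/
def cascadeY {b : ℕ} {Ω : Type*} (X : List (Fin b) → Ω → ℝ) (w : List (Fin b)) (ω : Ω) : ℝ :=
  ∏ k ∈ Finset.range w.length, X (w.take (k + 1)) ω

/-- The total mass `Z_n = ∑_{|u| = n} Y_u ν([u])`. -/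
def cascadeZ {b : ℕ} {Ω : Type*} (X : List (Fin b) → Ω → ℝ) (ν : Measure (SymbSpace b))
    (n : ℕ) (ω : Ω) : ℝ :=
  ∑ u : Fin n → Fin b, cascadeY X (List.ofFn u) ω * (ν (cylinder (List.ofFn u))).toReal

/-- `Z = limsup_n Z_n`. -/
def cascadeZlim {b : ℕ} {Ω : Type*} (X : List (Fin b) → Ω → ℝ) (ν : Measure (SymbSpace b))
    (ω : Ω) : ℝ :=
  Filter.limsup (fun n => cascadeZ X ν n ω) atTop

/-- Assumption (M1): the weights `X_u`, `u` a nonempty finite word, are i.i.d. with common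
law that of the nonnegative random variable `X₀` of expectation 1. -/
structure CascadeM1 {b : ℕ} {Ω : Type*} [MeasurableSpace Ω] (P : Measure Ω)
    (X : List (Fin b) → Ω → ℝ) (X₀ : Ω → ℝ) : Prop where
  meas : ∀ w, Measurable (X w)
  nonneg : ∀ w ω, 0 ≤ X w ω
  meas₀ : Measurable X₀
  nonneg₀ : ∀ ω, 0 ≤ X₀ ω
  mean₀ : ∫ ω, X₀ ω ∂P = 1
  indep : iIndepFun
    (fun w : {w : List (Fin b) // w ≠ []} => X w.1) P
  ident : ∀ w : List (Fin b), w ≠ [] → IdentDistrib (X w) X₀ P P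

/-- `h_X = E(X log X) ∈ [0, ∞]` (well defined since `x log x ≥ -e⁻¹` and, by convexity,
`E(X log X) ≥ E(X) log E(X) = 0`), encoded as an extended nonnegative real. -/
def entropyX {Ω : Type*} [MeasurableSpace Ω] (P : Measure Ω) (X₀ : Ω → ℝ) : ℝ≥0∞ :=
  (∫⁻ ω, ENNReal.ofReal (X₀ ω * Real.log (X₀ ω)) ∂P) -
    (∫⁻ ω, ENNReal.ofReal (-(X₀ ω * Real.log (X₀ ω))) ∂P)

/-- The lower local dimension `liminf_n (-log ν([x|_n]) / n)` of `ν` at `x`, valued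
in `[0, ∞]`. -/
def lowerLocalDim {b : ℕ} (ν : Measure (SymbSpace b)) (x : SymbSpace b) : ℝ≥0∞ :=
  Filter.liminf
    (fun n : ℕ => ENNReal.ofReal (-Real.log ((ν (cylinder (wordPrefix x n))).toReal) / n))
    atTop

/-- The upper local dimension `limsup_n (-log ν([x|_n]) / n)` of `ν` at `x`. -/
def upperLocalDim {b : ℕ} (ν : Measure (SymbSpace b)) (x : SymbSpace b) : ℝ≥0∞ :=
  Filter.limsup
    (fun n : ℕ => ENNReal.ofReal (-Real.log ((ν (cylinder (wordPrefix x n))).toReal) / n))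
    atTop

/-- The lower Hausdorff dimension of `ν`: the `ν`-essential infimum of the lower local
dimension. -/
def lowerHausdorffDim {b : ℕ} (ν : Measure (SymbSpace b)) : ℝ≥0∞ :=
  essInf (lowerLocalDim ν) ν

/-- The upper Hausdorff dimension of `ν`: the `ν`-essential supremum of the lower local
dimension. -/
def upperHausdorffDim {b : ℕ} (ν : Measure (SymbSpace b)) : ℝ≥0∞ :=
  essSup (lowerLocalDim ν) ν

/-- The upper packing dimension of `ν`: the `ν`-essential supremum of the upper local
dimension. -/
def upperPackingDim {b : ℕ} (ν : Measure (SymbSpace b)) : ℝ≥0∞ :=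
  essSup (upperLocalDim ν) ν



lemma wordPrefix_length {b : ℕ} (x : SymbSpace b) (n : ℕ) : (wordPrefix x n).length = n := by
  simp [wordPrefix]

lemma wordPrefix_take {b : ℕ} (x : SymbSpace b) {k n : ℕ} (h : k ≤ n) :
    (wordPrefix x n).take k = wordPrefix x k := by
  apply List.ext_getElem
  · simp [wordPrefix, h]
  · intro i h1 h2
    simp [wordPrefix]

lemma cascadeY_wordPrefix {b : ℕ} {Ω : Type*} (X : List (Fin b) → Ω → ℝ) (x : SymbSpace b)
    (n : ℕ) (ω : Ω) :
    cascadeY X (wordPrefix x n) ω = ∏ k ∈ Finset.range n, X (wordPrefix x (k + 1)) ω := by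
  unfold cascadeY
  rw [wordPrefix_length]
  refine Finset.prod_congr rfl fun k hk => ?_
  rw [wordPrefix_take x (Finset.mem_range.mp hk)]

lemma cylinder_ofFn {b n : ℕ} (u : Fin n → Fin b) :
    cylinder (List.ofFn u) = (fun (x : SymbSpace b) (i : Fin n) => x i) ⁻¹' {u} := by
  ext x
  simp only [_root_.cylinder, Set.mem_ofPred_eq, Set.mem_preimage, Set.mem_singleton_iff, funext_iff]
  constructor
  · intro h i
    have := h ⟨i, by simp⟩
    simpa using this
  · intro h i
    have := h ⟨i, by simpa using i.2⟩
    simpa using this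

lemma measurable_restr {b : ℕ} (n : ℕ) :
    Measurable (fun (x : SymbSpace b) (i : Fin n) => x i) := by
  fun_prop

lemma lintegral_words {b : ℕ} (ν : Measure (SymbSpace b)) (n : ℕ) (g : List (Fin b) → ℝ≥0∞) :
    ∫⁻ x, g (wordPrefix x n) ∂ν =
      ∑ u : Fin n → Fin b, g (List.ofFn u) * ν (cylinder (List.ofFn u)) := by
  have h1 : ∫⁻ x, g (wordPrefix x n) ∂ν
      = ∫⁻ u : Fin n → Fin b, g (List.ofFn u)
          ∂(ν.map (fun (x : SymbSpace b) (i : Fin n) => x i)) := by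
    rw [lintegral_map (measurable_of_countable _) (measurable_restr n)]
    rfl
  rw [h1, lintegral_fintype]
  refine Finset.sum_congr rfl fun u _ => ?_
  rw [Measure.map_apply (measurable_restr n) (measurableSet_singleton u), cylinder_ofFn]

lemma measurable_words {b : ℕ} {α : Type*} [MeasurableSpace α] (n : ℕ) (g : List (Fin b) → α) :
    Measurable (fun x : SymbSpace b => g (wordPrefix x n)) :=
  (measurable_of_countable (fun u : Fin n → Fin b => g (List.ofFn u))).comp (measurable_restr n)

lemma integral_words {b : ℕ} (ν : Measure (SymbSpace b)) [IsProbabilityMeasure ν] (n : ℕ)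
    (g : List (Fin b) → ℝ) :
    ∫ x, g (wordPrefix x n) ∂ν =
      ∑ u : Fin n → Fin b, g (List.ofFn u) * (ν (cylinder (List.ofFn u))).toReal := by
  have h1 : ∫ x, g (wordPrefix x n) ∂ν
      = ∫ u : Fin n → Fin b, g (List.ofFn u)
          ∂(ν.map (fun (x : SymbSpace b) (i : Fin n) => x i)) := by
    rw [integral_map (measurable_restr n).aemeasurable
      (measurable_of_countable _).aestronglyMeasurable]
    rfl
  have : IsProbabilityMeasure (ν.map (fun (x : SymbSpace b) (i : Fin n) => x i)) :=
    Measure.isProbabilityMeasure_map (measurable_restr n).aemeasurable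
  rw [h1, integral_fintype Integrable.of_finite]
  refine Finset.sum_congr rfl fun u _ => ?_
  rw [Measure.real, Measure.map_apply (measurable_restr n) (measurableSet_singleton u),
    cylinder_ofFn, smul_eq_mul, mul_comm]

lemma cascadeZ_eq_integral {b : ℕ} {Ω : Type*} (X : List (Fin b) → Ω → ℝ)
    (ν : Measure (SymbSpace b)) [IsProbabilityMeasure ν] (n : ℕ) (ω : Ω) :
    cascadeZ X ν n ω = ∫ x, cascadeY X (wordPrefix x n) ω ∂ν :=
  (integral_words ν n (fun w => cascadeY X w ω)).symm

lemma cascadeY_nonneg {b : ℕ} {Ω : Type*} [MeasurableSpace Ω] {P : Measure Ω}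
    {X : List (Fin b) → Ω → ℝ} {X₀ : Ω → ℝ} (hM : CascadeM1 P X X₀) (w : List (Fin b)) (ω : Ω) :
    0 ≤ cascadeY X w ω :=
  Finset.prod_nonneg fun _ _ => hM.nonneg _ _

lemma cascadeZ_nonneg {b : ℕ} {Ω : Type*} [MeasurableSpace Ω] {P : Measure Ω}
    {X : List (Fin b) → Ω → ℝ} {X₀ : Ω → ℝ} (hM : CascadeM1 P X X₀)
    (ν : Measure (SymbSpace b)) (n : ℕ) (ω : Ω) :
    0 ≤ cascadeZ X ν n ω :=
  Finset.sum_nonneg fun _ _ => mul_nonneg (cascadeY_nonneg hM _ _) ENNReal.toReal_nonneg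

lemma cascadeY_measurable {b : ℕ} {Ω : Type*} [MeasurableSpace Ω] {P : Measure Ω}
    {X : List (Fin b) → Ω → ℝ} {X₀ : Ω → ℝ} (hM : CascadeM1 P X X₀) (w : List (Fin b)) :
    Measurable (cascadeY X w) :=
  Finset.measurable_fun_prod _ fun _ _ => hM.meas _

lemma cascadeZ_measurable {b : ℕ} {Ω : Type*} [MeasurableSpace Ω] {P : Measure Ω}
    {X : List (Fin b) → Ω → ℝ} {X₀ : Ω → ℝ} (hM : CascadeM1 P X X₀)
    (ν : Measure (SymbSpace b)) (n : ℕ) :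
    Measurable (cascadeZ X ν n) :=
  Finset.measurable_fun_sum _ fun _ _ => (cascadeY_measurable hM _).mul_const _

lemma ofReal_cascadeZ {b : ℕ} {Ω : Type*} [MeasurableSpace Ω] {P : Measure Ω}
    {X : List (Fin b) → Ω → ℝ} {X₀ : Ω → ℝ} (hM : CascadeM1 P X X₀)
    (ν : Measure (SymbSpace b)) [IsProbabilityMeasure ν] (n : ℕ) (ω : Ω) :
    ENNReal.ofReal (cascadeZ X ν n ω) =
      ∑ u : Fin n → Fin b, ENNReal.ofReal (cascadeY X (List.ofFn u) ω)
        * ν (cylinder (List.ofFn u)) := by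
  unfold cascadeZ
  rw [ENNReal.ofReal_sum_of_nonneg
    (fun _ _ => mul_nonneg (cascadeY_nonneg hM _ _) ENNReal.toReal_nonneg)]
  refine Finset.sum_congr rfl fun u _ => ?_
  rw [ENNReal.ofReal_mul (cascadeY_nonneg hM _ _), ENNReal.ofReal_toReal (measure_ne_top _ _)]

lemma lintegral_cascade_prod {b : ℕ} {Ω : Type*} [MeasurableSpace Ω] {P : Measure Ω}
    {X : List (Fin b) → Ω → ℝ} {X₀ : Ω → ℝ} (hM : CascadeM1 P X X₀) (x : SymbSpace b) (N : ℕ)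
    (f : ℕ → ℝ → ℝ≥0∞) (hf : ∀ k, Measurable (f k)) :
    ∫⁻ ω, ∏ k ∈ Finset.range N, f k (X (wordPrefix x (k + 1)) ω) ∂P =
      ∏ k ∈ Finset.range N, ∫⁻ ω, f k (X₀ ω) ∂P := by
  have hne : ∀ k, wordPrefix x (k + 1) ≠ [] := fun k h => by
    have := congrArg List.length h
    simp [wordPrefix_length] at this
  have hinj : Function.Injective
      (fun k : ℕ => (⟨wordPrefix x (k + 1), hne k⟩ : {w : List (Fin b) // w ≠ []})) := by
    intro i j hij
    have := congrArg (fun w => w.1.length) hij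
    simpa [wordPrefix_length] using this
  have hind := (hM.indep.precomp hinj).comp f hf
  have := lintegral_prod_eq_prod_lintegral_of_indepFun (Finset.range N) _ hind
    (fun k => (hf k).comp (hM.meas _))
  refine this.trans (Finset.prod_congr rfl fun k _ => ?_)
  exact ((hM.ident _ (hne k)).comp (hf k)).lintegral_eq

lemma integrable_X₀ {b : ℕ} {Ω : Type*} [MeasurableSpace Ω] {P : Measure Ω}
    {X : List (Fin b) → Ω → ℝ} {X₀ : Ω → ℝ} (hM : CascadeM1 P X X₀) : Integrable X₀ P := by
  by_contra h
  have := hM.mean₀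
  rw [integral_undef h] at this
  exact zero_ne_one this

lemma lintegral_X₀ {b : ℕ} {Ω : Type*} [MeasurableSpace Ω] {P : Measure Ω}
    {X : List (Fin b) → Ω → ℝ} {X₀ : Ω → ℝ} (hM : CascadeM1 P X X₀) :
    ∫⁻ ω, ENNReal.ofReal (X₀ ω) ∂P = 1 := by
  rw [← ofReal_integral_eq_lintegral_ofReal (integrable_X₀ hM) (ae_of_all _ hM.nonneg₀), hM.mean₀,
    ENNReal.ofReal_one]

lemma lintegral_cascadeY {b : ℕ} {Ω : Type*} [MeasurableSpace Ω] {P : Measure Ω}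
    {X : List (Fin b) → Ω → ℝ} {X₀ : Ω → ℝ} (hM : CascadeM1 P X X₀) (x : SymbSpace b) (n : ℕ) :
    ∫⁻ ω, ENNReal.ofReal (cascadeY X (wordPrefix x n) ω) ∂P = 1 := by
  have := lintegral_cascade_prod hM x n (fun _ => ENNReal.ofReal)
    (fun _ => ENNReal.measurable_ofReal)
  simp only [lintegral_X₀ hM, Finset.prod_const_one] at this
  rw [← this]
  refine lintegral_congr fun ω => ?_
  rw [cascadeY_wordPrefix, ENNReal.ofReal_prod_of_nonneg fun _ _ => hM.nonneg _ _]

lemma exists_extend {b : ℕ} (hb : 2 ≤ b) {n : ℕ} (u : Fin n → Fin b) :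
    ∃ x : SymbSpace b, wordPrefix x n = List.ofFn u :=
  ⟨fun i => if h : i < n then u ⟨i, h⟩ else ⟨0, by omega⟩, by simp [wordPrefix]⟩

lemma lintegral_cascadeZ {b : ℕ} (hb : 2 ≤ b) {Ω : Type*} [MeasurableSpace Ω] {P : Measure Ω}
    {X : List (Fin b) → Ω → ℝ} {X₀ : Ω → ℝ} (hM : CascadeM1 P X X₀)
    (ν : Measure (SymbSpace b)) [IsProbabilityMeasure ν] (n : ℕ) :
    ∫⁻ ω, ENNReal.ofReal (cascadeZ X ν n ω) ∂P = 1 := by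
  simp_rw [ofReal_cascadeZ hM ν n]
  rw [lintegral_finsetSum _
    (fun u _ => (cascadeY_measurable hM _).ennreal_ofReal.mul_const _)]
  have h1 := lintegral_words ν n (fun _ => 1)
  simp only [lintegral_const, measure_univ, mul_one, one_mul] at h1
  rw [h1]
  refine Finset.sum_congr rfl fun u _ => ?_
  rw [lintegral_mul_const _ (cascadeY_measurable hM _).ennreal_ofReal]
  obtain ⟨x, hx⟩ := exists_extend hb u
  rw [← hx, lintegral_cascadeY hM, one_mul]

/-- The filtration generated by the weights. -/
def cascadeFiltration {b : ℕ} {Ω : Type*} [mΩ : MeasurableSpace Ω] {P : Measure Ω}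
    {X : List (Fin b) → Ω → ℝ} {X₀ : Ω → ℝ} (hM : CascadeM1 P X X₀) : Filtration ℕ mΩ where
  seq n := ⨆ w ∈ {w : {w : List (Fin b) // w ≠ []} | w.1.length ≤ n},
    MeasurableSpace.comap (X w.1) inferInstance
  mono' i j hij := by
    refine biSup_mono fun w hw => ?_
    exact le_trans (show w.1.length ≤ i from hw) hij
  le' n := iSup₂_le fun w _ => (hM.meas w.1).comap_le

lemma X_measurable_filtration {b : ℕ} {Ω : Type*} [mΩ : MeasurableSpace Ω] {P : Measure Ω}
    {X : List (Fin b) → Ω → ℝ} {X₀ : Ω → ℝ} (hM : CascadeM1 P X X₀) {w : List (Fin b)}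
    (hw : w ≠ []) {n : ℕ} (hn : w.length ≤ n) : Measurable[cascadeFiltration hM n] (X w) := by
  have h1 : MeasurableSpace.comap (X w) inferInstance ≤ cascadeFiltration hM n :=
    le_iSup₂_of_le (f := fun (w : {w : List (Fin b) // w ≠ []})
      (_ : w ∈ {w : {w : List (Fin b) // w ≠ []} | w.1.length ≤ n}) =>
        MeasurableSpace.comap (X w.1) inferInstance) ⟨w, hw⟩ hn le_rfl
  exact (comap_measurable (X w)).mono h1 le_rfl

lemma Y_measurable_filtration {b : ℕ} {Ω : Type*} [mΩ : MeasurableSpace Ω] {P : Measure Ω}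
    {X : List (Fin b) → Ω → ℝ} {X₀ : Ω → ℝ} (hM : CascadeM1 P X X₀) {w : List (Fin b)}
    {n : ℕ} (hn : w.length ≤ n) : Measurable[cascadeFiltration hM n] (cascadeY X w) := by
  unfold cascadeY
  refine Finset.measurable_fun_prod _ fun k hk => ?_
  have hk' := Finset.mem_range.mp hk
  refine X_measurable_filtration hM ?_ ?_
  · intro h
    have := congrArg List.length h
    simp at this
    subst this
    simp at hk'
  · simp; omega

lemma integrable_cascadeY {b : ℕ} (hb : 2 ≤ b) {Ω : Type*} [MeasurableSpace Ω] {P : Measure Ω}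
    {X : List (Fin b) → Ω → ℝ} {X₀ : Ω → ℝ} (hM : CascadeM1 P X X₀) {n : ℕ} (u : Fin n → Fin b) :
    Integrable (cascadeY X (List.ofFn u)) P := by
  obtain ⟨x, hx⟩ := exists_extend hb u
  refine ⟨(cascadeY_measurable hM _).aestronglyMeasurable, ?_⟩
  rw [hasFiniteIntegral_iff_ofReal (ae_of_all _ (cascadeY_nonneg hM _)), ← hx,
    lintegral_cascadeY hM]
  exact ENNReal.one_lt_top

lemma integrable_cascadeZ {b : ℕ} (hb : 2 ≤ b) {Ω : Type*} [MeasurableSpace Ω] {P : Measure Ω}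
    {X : List (Fin b) → Ω → ℝ} {X₀ : Ω → ℝ} (hM : CascadeM1 P X X₀)
    (ν : Measure (SymbSpace b)) (n : ℕ) :
    Integrable (cascadeZ X ν n) P :=
  integrable_finsetSum _ fun u _ => (integrable_cascadeY hb hM u).mul_const _

lemma cascadeY_succ {b : ℕ} {Ω : Type*} (X : List (Fin b) → Ω → ℝ) {n : ℕ}
    (u : Fin (n + 1) → Fin b) :
    cascadeY X (List.ofFn u) = cascadeY X ((List.ofFn u).take n) * X (List.ofFn u) := by
  ext ω
  simp only [cascadeY, Pi.mul_apply, List.length_ofFn, List.length_take]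
  rw [Finset.prod_range_succ, min_eq_left (Nat.le_succ n)]
  congr 1
  · refine Finset.prod_congr rfl fun k hk => ?_
    have := Finset.mem_range.mp hk
    rw [List.take_take, min_eq_left (by omega)]
  · rw [List.take_of_length_le (by simp)]

lemma cascadeZ_eq_succ {b : ℕ} {Ω : Type*} (X : List (Fin b) → Ω → ℝ)
    (ν : Measure (SymbSpace b)) [IsProbabilityMeasure ν] (n : ℕ) (ω : Ω) :
    cascadeZ X ν n ω = ∑ u : Fin (n + 1) → Fin b,
      cascadeY X ((List.ofFn u).take n) ω * (ν (cylinder (List.ofFn u))).toReal := by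
  rw [← integral_words ν (n + 1) (fun w => cascadeY X (w.take n) ω), cascadeZ_eq_integral]
  refine integral_congr_ae (ae_of_all _ fun x => ?_)
  simp only [wordPrefix_take x (Nat.le_succ n)]

lemma cascade_condExp_term {b : ℕ} (hb : 2 ≤ b) {Ω : Type*} [MeasurableSpace Ω] {P : Measure Ω}
    [IsProbabilityMeasure P]
    {X : List (Fin b) → Ω → ℝ} {X₀ : Ω → ℝ} (hM : CascadeM1 P X X₀) {n : ℕ}
    (u : Fin (n + 1) → Fin b) :
    P[cascadeY X (List.ofFn u) | cascadeFiltration hM n]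
      =ᵐ[P] cascadeY X ((List.ofFn u).take n) := by
  have hne : List.ofFn u ≠ [] := by
    intro h
    have := congrArg List.length h
    simp at this
  have hX : Integrable (X (List.ofFn u)) P :=
    (hM.ident _ hne).integrable_iff.mpr (integrable_X₀ hM)
  have hY := integrable_cascadeY hb hM u
  have hmeas : StronglyMeasurable[cascadeFiltration hM n] (cascadeY X ((List.ofFn u).take n)) :=
    (Y_measurable_filtration hM (by simp)).stronglyMeasurable
  have hind : Indep (MeasurableSpace.comap (X (List.ofFn u)) inferInstance)
      (cascadeFiltration hM n) P := by
    have hd : Disjoint ({⟨List.ofFn u, hne⟩} : Set {w : List (Fin b) // w ≠ []})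
        {w : {w : List (Fin b) // w ≠ []} | w.1.length ≤ n} := by
      rw [Set.disjoint_singleton_left]
      intro h
      have h' : (List.ofFn u).length ≤ n := h
      simp at h'
    have := indep_iSup_of_disjoint (fun w : {w : List (Fin b) // w ≠ []} => (hM.meas w.1).comap_le)
      hM.indep hd
    simpa [cascadeFiltration] using this
  have hc := condExp_indep_eq (hM.meas _).comap_le ((cascadeFiltration hM).le n)
    (comap_measurable (X (List.ofFn u))).stronglyMeasurable hind
  rw [cascadeY_succ] at hY ⊢
  refine (condExp_mul_of_stronglyMeasurable_left hmeas hY hX).trans ?_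
  filter_upwards [hc] with ω hω
  rw [Pi.mul_apply, hω, (hM.ident _ hne).integral_eq, hM.mean₀, mul_one]

lemma cascade_martingale {b : ℕ} (hb : 2 ≤ b) {Ω : Type*} [MeasurableSpace Ω] {P : Measure Ω}
    [IsProbabilityMeasure P]
    {X : List (Fin b) → Ω → ℝ} {X₀ : Ω → ℝ} (hM : CascadeM1 P X X₀)
    (ν : Measure (SymbSpace b)) [IsProbabilityMeasure ν] :
    Martingale (cascadeZ X ν) (cascadeFiltration hM) P := by
  refine martingale_nat ?_ (integrable_cascadeZ hb hM ν) ?_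
  · intro n
    refine Measurable.stronglyMeasurable ?_
    exact Finset.measurable_fun_sum _ fun u _ =>
      (Y_measurable_filtration hM (by simp)).mul_const _
  · intro n
    have e : cascadeZ X ν (n + 1) = ∑ u : Fin (n + 1) → Fin b,
        (ν (cylinder (List.ofFn u))).toReal • cascadeY X (List.ofFn u) := by
      ext ω
      simp [cascadeZ, mul_comm]
    rw [e]
    have h1 := condExp_finsetSum (μ := P) (s := Finset.univ)
      (f := fun u : Fin (n + 1) → Fin b =>
        (ν (cylinder (List.ofFn u))).toReal • cascadeY X (List.ofFn u))
      (fun u _ => (integrable_cascadeY hb hM u).smul _) (cascadeFiltration hM n)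
    have h2 : ∀ᵐ ω ∂P, ∀ u : Fin (n + 1) → Fin b,
        (P[(ν (cylinder (List.ofFn u))).toReal • cascadeY X (List.ofFn u) |
          cascadeFiltration hM n]) ω
        = (ν (cylinder (List.ofFn u))).toReal • cascadeY X ((List.ofFn u).take n) ω := by
      rw [ae_all_iff]
      intro u
      filter_upwards [condExp_smul (μ := P) (ν (cylinder (List.ofFn u))).toReal
        (cascadeY X (List.ofFn u)) (cascadeFiltration hM n), cascade_condExp_term hb hM u]
        with ω h1 h2
      rw [h1, Pi.smul_apply, h2]
    filter_upwards [h1, h2] with ω h1 h2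
    rw [h1, cascadeZ_eq_succ, Finset.sum_apply]
    refine Finset.sum_congr rfl fun u _ => ?_
    rw [h2, smul_eq_mul, mul_comm]

lemma cascade_converges {b : ℕ} (hb : 2 ≤ b) {Ω : Type*} [MeasurableSpace Ω] {P : Measure Ω}
    [IsProbabilityMeasure P]
    {X : List (Fin b) → Ω → ℝ} {X₀ : Ω → ℝ} (hM : CascadeM1 P X X₀)
    (ν : Measure (SymbSpace b)) [IsProbabilityMeasure ν] :
    ∀ᵐ ω ∂P, ∃ c, Tendsto (fun n => cascadeZ X ν n ω) atTop (nhds c) := by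
  refine (cascade_martingale hb hM ν).submartingale.exists_ae_tendsto_of_bdd (R := 1) fun n => ?_
  rw [eLpNorm_one_eq_lintegral_enorm, ENNReal.coe_one, ← lintegral_cascadeZ hb hM ν n]
  refine lintegral_mono fun ω => ?_
  rw [Real.enorm_eq_ofReal (cascadeZ_nonneg hM ν n ω)]

lemma neg_one_le_mul_log {x : ℝ} (hx : 0 ≤ x) : -1 ≤ x * Real.log x := by
  rcases hx.eq_or_lt with rfl | hx
  · simp
  · have h := Real.one_sub_inv_le_log_of_pos hx
    have := mul_le_mul_of_nonneg_left h hx.le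
    rw [mul_sub, mul_inv_cancel₀ hx.ne'] at this
    linarith

lemma rpow_le_affine {x s : ℝ} (hx : 0 ≤ x) (hs : 0 < s) (hs1 : s < 1) :
    x ^ (1 - s) ≤ (1 - s) * x + s := by
  have := Real.geom_mean_le_arith_mean2_weighted (by linarith : 0 ≤ 1 - s) hs.le hx zero_le_one
    (by ring)
  simpa using this

lemma tendsto_entropy {x : ℝ} (hx : 0 ≤ x) :
    Tendsto (fun s : ℝ => (x - x ^ (1 - s)) / s + 1) (nhdsWithin 0 (Ioi 0))
      (nhds (x * Real.log x + 1)) := by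
  refine Tendsto.add_const _ ?_
  rcases hx.eq_or_lt with rfl | hx
  · have : Tendsto (fun _ : ℝ => (0:ℝ)) (nhdsWithin 0 (Ioi 0)) (nhds (0 * Real.log 0)) := by
      simp
    refine this.congr' ?_
    filter_upwards [Ioo_mem_nhdsGT (zero_lt_one)] with s hs
    rw [Real.zero_rpow (by linarith [hs.2])]
    simp
  · have hd : HasDerivAt (fun s : ℝ => x ^ (1 - s)) (-(x * Real.log x)) 0 := by
      have h1 : HasDerivAt (fun s : ℝ => 1 - s) (-1) 0 := by
        simpa using (hasDerivAt_id (0:ℝ)).const_sub 1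
      have := h1.const_rpow hx
      convert this using 1
      simp; ring
    have := hd.tendsto_slope_zero_right.neg
    rw [neg_neg] at this
    refine this.congr fun s => ?_
    simp only [zero_add, sub_zero, Real.rpow_one, smul_eq_mul]
    rw [div_eq_inv_mul]
    ring

lemma exists_exponent {b : ℕ} {Ω : Type*} [MeasurableSpace Ω] {P : Measure Ω}
    [IsProbabilityMeasure P]
    {X : List (Fin b) → Ω → ℝ} {X₀ : Ω → ℝ} (hM : CascadeM1 P X X₀) {a : NNReal}
    (ha : (a : ℝ≥0∞) < entropyX P X₀) :
    ∃ s : ℝ, 0 < s ∧ s < 1 ∧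
      ∫⁻ ω, ENNReal.ofReal (X₀ ω ^ (1 - s)) ∂P < ENNReal.ofReal (Real.exp (-(s * a))) := by
  have hm0 := hM.meas₀
  have hml : Measurable fun ω => X₀ ω * Real.log (X₀ ω) := by fun_prop
  have hint : ∫⁻ ω, ENNReal.ofReal (X₀ ω * Real.log (X₀ ω)) ∂P + 1 =
      ∫⁻ ω, ENNReal.ofReal (X₀ ω * Real.log (X₀ ω) + 1) ∂P +
      ∫⁻ ω, ENNReal.ofReal (-(X₀ ω * Real.log (X₀ ω))) ∂P := by
    have hmn : Measurable fun ω => ENNReal.ofReal (-(X₀ ω * Real.log (X₀ ω))) := by fun_prop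
    rw [← lintegral_add_right _ hmn]
    have : (1 : ℝ≥0∞) = ∫⁻ _, 1 ∂P := by simp
    rw [this, ← lintegral_add_right _ measurable_const]
    refine lintegral_congr fun ω => ?_
    have h := neg_one_le_mul_log (hM.nonneg₀ ω)
    rcases le_total 0 (X₀ ω * Real.log (X₀ ω)) with h0 | h0
    · rw [ENNReal.ofReal_of_nonpos (p := -(X₀ ω * Real.log (X₀ ω))) (by linarith),
        ENNReal.ofReal_add h0 zero_le_one]
      simp
    · rw [ENNReal.ofReal_of_nonpos h0, ← ENNReal.ofReal_add (by linarith) (by linarith)]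
      simp
  have hBfin : ∫⁻ ω, ENNReal.ofReal (-(X₀ ω * Real.log (X₀ ω))) ∂P ≤ 1 := by
    calc _ ≤ ∫⁻ _, 1 ∂P := lintegral_mono fun ω => by
          rw [← ENNReal.ofReal_one]
          exact ENNReal.ofReal_le_ofReal (by linarith [neg_one_le_mul_log (hM.nonneg₀ ω)])
      _ = 1 := by simp
  have hBtop : ∫⁻ ω, ENNReal.ofReal (-(X₀ ω * Real.log (X₀ ω))) ∂P ≠ ⊤ :=
    ne_top_of_le_ne_top ENNReal.one_ne_top hBfin
  have hlt : (a : ℝ≥0∞) + 1 < ∫⁻ ω, ENNReal.ofReal (X₀ ω * Real.log (X₀ ω) + 1) ∂P := by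
    have h1 := lt_tsub_iff_right.mp ha
    have h2 := ENNReal.add_lt_add_right ENNReal.one_ne_top h1
    rw [hint, add_right_comm] at h2
    exact lt_of_add_lt_add_right h2
  have hF : ∫⁻ ω, ENNReal.ofReal (X₀ ω * Real.log (X₀ ω) + 1) ∂P ≤
      liminf (fun s : ℝ => ∫⁻ ω, ENNReal.ofReal ((X₀ ω - X₀ ω ^ (1 - s)) / s + 1) ∂P)
        (nhdsWithin 0 (Ioi 0)) := by
    refine le_trans (le_of_eq ?_) (lintegral_liminf_le (fun s => ?_))
    · refine lintegral_congr fun ω => ?_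
      exact (((ENNReal.continuous_ofReal.tendsto _).comp
        (tendsto_entropy (hM.nonneg₀ ω))).liminf_eq).symm
    · fun_prop
  have hev := eventually_lt_of_lt_liminf (lt_of_lt_of_le hlt hF)
  obtain ⟨s, hs, hs0, hs1⟩ := (hev.and (Ioo_mem_nhdsGT (zero_lt_one (α := ℝ)))).exists
  refine ⟨s, hs0, hs1, ?_⟩
  have hi0 := integrable_X₀ hM
  have hi : Integrable (fun ω => X₀ ω ^ (1 - s)) P := by
    refine Integrable.mono' ((hi0.const_mul (1 - s)).add (integrable_const s))
      (by fun_prop : Measurable fun ω => X₀ ω ^ (1 - s)).aestronglyMeasurable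
      (ae_of_all _ fun ω => ?_)
    rw [Real.norm_of_nonneg (Real.rpow_nonneg (hM.nonneg₀ ω) _)]
    exact rpow_le_affine (hM.nonneg₀ ω) hs0 hs1
  have hi1 : Integrable (fun ω => (X₀ ω - X₀ ω ^ (1 - s)) / s) P := (hi0.sub hi).div_const s
  have hi2 : Integrable (fun ω => (X₀ ω - X₀ ω ^ (1 - s)) / s + 1) P :=
    hi1.add (integrable_const 1)
  have hnn : ∀ ω, 0 ≤ (X₀ ω - X₀ ω ^ (1 - s)) / s + 1 := by
    intro ω
    have h := rpow_le_affine (hM.nonneg₀ ω) hs0 hs1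
    have h0 := hM.nonneg₀ ω
    have : -1 ≤ (X₀ ω - X₀ ω ^ (1 - s)) / s := by
      rw [le_div_iff₀ hs0]
      nlinarith
    linarith
  rw [← ofReal_integral_eq_lintegral_ofReal hi2 (ae_of_all _ hnn),
    integral_add hi1 (integrable_const 1), integral_div,
    integral_sub hi0 hi, hM.mean₀] at hs
  rw [← ofReal_integral_eq_lintegral_ofReal hi
    (ae_of_all _ fun ω => Real.rpow_nonneg (hM.nonneg₀ ω) _)]
  rw [ENNReal.ofReal_lt_ofReal_iff (Real.exp_pos _)]
  have e : (a : ℝ≥0∞) + 1 = ENNReal.ofReal ((a : ℝ) + 1) := by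
    rw [ENNReal.ofReal_add a.coe_nonneg zero_le_one]; simp
  rw [e, ENNReal.ofReal_lt_ofReal_iff_of_nonneg (by positivity)] at hs
  simp only [integral_const, probReal_univ, smul_eq_mul, mul_one] at hs
  have hs' : (a : ℝ) < (1 - ∫ ω, X₀ ω ^ (1 - s) ∂P) / s := by linarith
  rw [lt_div_iff₀ hs0] at hs'
  have := Real.add_one_le_exp (-(s * (a : ℝ)))
  nlinarith

lemma cascade_term_le {b : ℕ} {Ω : Type*} [MeasurableSpace Ω] {P : Measure Ω}
    {X : List (Fin b) → Ω → ℝ} {X₀ : Ω → ℝ} (hM : CascadeM1 P X X₀)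
    (ν : Measure (SymbSpace b)) (x : SymbSpace b) (n : ℕ) (ω : Ω) :
    cascadeY X (wordPrefix x n) ω * (ν (cylinder (wordPrefix x n))).toReal ≤ cascadeZ X ν n ω :=
  Finset.single_le_sum (f := fun u : Fin n → Fin b =>
    cascadeY X (List.ofFn u) ω * (ν (cylinder (List.ofFn u))).toReal)
    (fun _ _ => mul_nonneg (cascadeY_nonneg hM _ _) ENNReal.toReal_nonneg)
    (Finset.mem_univ (fun i : Fin n => x i))

lemma measurableSet_bounded {b : ℕ} {Ω : Type*} [MeasurableSpace Ω] {P : Measure Ω}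
    {X : List (Fin b) → Ω → ℝ} {X₀ : Ω → ℝ} (hM : CascadeM1 P X X₀)
    (ν : Measure (SymbSpace b)) (K : ℝ) :
    MeasurableSet {ω | ∀ n, cascadeZ X ν n ω ≤ K} := by
  rw [Set.ofPred_forall]
  exact MeasurableSet.iInter fun n => measurableSet_le (cascadeZ_measurable hM ν n) measurable_const

lemma cascade_bound {b : ℕ} {Ω : Type*} [MeasurableSpace Ω] {P : Measure Ω}
    {X : List (Fin b) → Ω → ℝ} {X₀ : Ω → ℝ} (hM : CascadeM1 P X X₀)
    (ν : Measure (SymbSpace b)) (x : SymbSpace b) {n N : ℕ} (hnN : n ≤ N) {K s : ℝ}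
    (hs0 : 0 < s) (hs1 : s < 1)
    (hpos : 0 < (ν (cylinder (wordPrefix x n))).toReal) :
    ∫⁻ ω in {ω | ∀ n, cascadeZ X ν n ω ≤ K}, ENNReal.ofReal (cascadeY X (wordPrefix x N) ω) ∂P ≤
      ENNReal.ofReal ((K / (ν (cylinder (wordPrefix x n))).toReal) ^ s) *
        (∫⁻ ω, ENNReal.ofReal (X₀ ω ^ (1 - s)) ∂P) ^ n := by
  set c := (ν (cylinder (wordPrefix x n))).toReal with hc
  let f : ℕ → ℝ → ℝ≥0∞ := fun k t =>
    if k < n then ENNReal.ofReal (t ^ (1 - s)) else ENNReal.ofReal t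
  have hf : ∀ k, Measurable (f k) := by
    intro k
    by_cases h : k < n
    · simp only [f, h, if_true]; fun_prop
    · simp only [f, h, if_false]; fun_prop
  have hprod := lintegral_cascade_prod hM x N f hf
  have hR : ∏ k ∈ Finset.range N, ∫⁻ ω, f k (X₀ ω) ∂P
      = (∫⁻ ω, ENNReal.ofReal (X₀ ω ^ (1 - s)) ∂P) ^ n := by
    rw [← Finset.prod_range_mul_prod_Ico _ hnN]
    have h1 : ∏ k ∈ Finset.range n, ∫⁻ ω, f k (X₀ ω) ∂P
        = ∏ k ∈ Finset.range n, ∫⁻ ω, ENNReal.ofReal (X₀ ω ^ (1 - s)) ∂P :=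
      Finset.prod_congr rfl fun k hk => by simp only [f, Finset.mem_range.mp hk, if_true]
    have h2 : ∏ k ∈ Finset.Ico n N, ∫⁻ ω, f k (X₀ ω) ∂P = 1 :=
      Finset.prod_eq_one fun k hk => by
        simp only [f, not_lt.mpr (Finset.mem_Ico.mp hk).1, if_false]
        exact lintegral_X₀ hM
    rw [h1, h2, mul_one, Finset.prod_const, Finset.card_range]
  rw [← hR, ← hprod, ← lintegral_const_mul' _ _ ENNReal.ofReal_ne_top]
  refine le_trans (setLIntegral_mono' (measurableSet_bounded hM ν K) fun ω hω => ?_)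
    (setLIntegral_le_lintegral _ _)
  have hω' : ∀ n, cascadeZ X ν n ω ≤ K := hω
  have hYn := cascadeY_nonneg hM (wordPrefix x n) ω
  have hle : cascadeY X (wordPrefix x n) ω ≤ K / c := by
    rw [le_div_iff₀ hpos]
    exact (cascade_term_le hM ν x n ω).trans (hω' n)
  have hY1 : cascadeY X (wordPrefix x n) ω ≤
      (K / c) ^ s * cascadeY X (wordPrefix x n) ω ^ (1 - s) := by
    calc cascadeY X (wordPrefix x n) ω
        = cascadeY X (wordPrefix x n) ω ^ s * cascadeY X (wordPrefix x n) ω ^ (1 - s) := by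
          rw [← Real.rpow_add_of_nonneg hYn hs0.le (by linarith)]
          simp
      _ ≤ _ := by
          gcongr
  have hprod1 : ∏ k ∈ Finset.range N, f k (X (wordPrefix x (k + 1)) ω)
      = ENNReal.ofReal (cascadeY X (wordPrefix x n) ω ^ (1 - s)) *
        ENNReal.ofReal (∏ k ∈ Finset.Ico n N, X (wordPrefix x (k + 1)) ω) := by
    rw [← Finset.prod_range_mul_prod_Ico _ hnN, cascadeY_wordPrefix,
      ← Real.finsetProd_rpow _ _ (fun _ _ => hM.nonneg _ _),
      ENNReal.ofReal_prod_of_nonneg (fun _ _ => Real.rpow_nonneg (hM.nonneg _ _) _),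
      ENNReal.ofReal_prod_of_nonneg (fun _ _ => hM.nonneg _ _)]
    congr 1
    · exact Finset.prod_congr rfl fun k hk => by simp only [f, Finset.mem_range.mp hk, if_true]
    · exact Finset.prod_congr rfl fun k hk => by
        simp only [f, not_lt.mpr (Finset.mem_Ico.mp hk).1, if_false]
  rw [hprod1, ← mul_assoc, ← ENNReal.ofReal_mul' (Real.rpow_nonneg hYn _),
    ← ENNReal.ofReal_mul' (Finset.prod_nonneg fun _ _ => hM.nonneg _ _)]
  apply ENNReal.ofReal_le_ofReal
  rw [cascadeY_wordPrefix X x N, ← Finset.prod_range_mul_prod_Ico _ hnN, ← cascadeY_wordPrefix]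
  exact mul_le_mul_of_nonneg_right hY1 (Finset.prod_nonneg fun _ _ => hM.nonneg _ _)

lemma ae_cylinder_pos {b : ℕ} (ν : Measure (SymbSpace b)) [IsProbabilityMeasure ν] :
    ∀ᵐ x ∂ν, ∀ n, 0 < (ν (cylinder (wordPrefix x n))).toReal := by
  classical
  rw [ae_all_iff]
  intro n
  let g : List (Fin b) → ℝ≥0∞ := fun w => if ν (cylinder w) = 0 then 1 else 0
  have h := lintegral_words ν n g
  have h0 : ∑ u : Fin n → Fin b, g (List.ofFn u) * ν (cylinder (List.ofFn u)) = 0 :=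
    Finset.sum_eq_zero fun u _ => by
      by_cases hu : ν (cylinder (List.ofFn u)) = 0 <;> simp [g, hu]
  rw [h0, lintegral_eq_zero_iff (measurable_words n g)] at h
  filter_upwards [h] with x hx
  refine ENNReal.toReal_pos (fun h0 => ?_) (measure_ne_top _ _)
  simp [g, h0] at hx

lemma cascade_pointwise {b : ℕ} {Ω : Type*} [MeasurableSpace Ω] {P : Measure Ω}
    [IsProbabilityMeasure P]
    {X : List (Fin b) → Ω → ℝ} {X₀ : Ω → ℝ} (hM : CascadeM1 P X X₀)
    (ν : Measure (SymbSpace b)) [IsProbabilityMeasure ν] (x : SymbSpace b) {K : ℝ} (hK : 0 < K)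
    (hpos : ∀ n, 0 < (ν (cylinder (wordPrefix x n))).toReal)
    (hx : lowerLocalDim ν x < entropyX P X₀) :
    Tendsto (fun N => ∫⁻ ω in {ω | ∀ n, cascadeZ X ν n ω ≤ K},
      ENNReal.ofReal (cascadeY X (wordPrefix x N) ω) ∂P) atTop (nhds 0) := by
  obtain ⟨a, ha1, ha2⟩ := ENNReal.lt_iff_exists_nnreal_btwn.mp hx
  obtain ⟨s, hs0, hs1, hs⟩ := exists_exponent hM ha2
  set Φ := ∫⁻ ω, ENNReal.ofReal (X₀ ω ^ (1 - s)) ∂P with hΦ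
  set q : ℝ≥0∞ := ENNReal.ofReal (Real.exp (s * a)) * Φ with hq
  have hq1 : q < 1 := by
    have h1 : ENNReal.ofReal (Real.exp (s * a)) * ENNReal.ofReal (Real.exp (-(s * a))) = 1 := by
      rw [← ENNReal.ofReal_mul (Real.exp_pos _).le, ← Real.exp_add]
      simp
    rw [hq, ← h1]
    exact ENNReal.mul_lt_mul_right (ENNReal.ofReal_pos.mpr (Real.exp_pos _)).ne'
      ENNReal.ofReal_ne_top hs
  have hlim : Tendsto (fun n : ℕ => ENNReal.ofReal (K ^ s) * q ^ n) atTop (nhds 0) := by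
    have := ENNReal.Tendsto.const_mul (a := ENNReal.ofReal (K ^ s))
      (ENNReal.tendsto_pow_atTop_nhds_zero_of_lt_one hq1) (Or.inr ENNReal.ofReal_ne_top)
    simpa using this
  have hfreq := frequently_lt_of_liminf_lt (by isBoundedDefault) ha1
  rw [ENNReal.tendsto_nhds_zero]
  intro ε hε
  have hev := (ENNReal.tendsto_nhds_zero.mp hlim ε hε).and (eventually_ge_atTop 1)
  obtain ⟨n, hn, hn2, hn1⟩ := (hfreq.and_eventually hev).exists
  filter_upwards [eventually_ge_atTop n] with N hN
  refine (cascade_bound hM ν x hN hs0 hs1 (hpos n)).trans (le_trans ?_ hn2)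
  have hp := hpos n
  set c := (ν (cylinder (wordPrefix x n))).toReal with hc
  have hn0 : (0 : ℝ) < n := by exact_mod_cast hn1
  have hlog : -Real.log c < n * a := by
    have h1 : ENNReal.ofReal (-Real.log c / n) < ENNReal.ofReal (a : ℝ) := by
      simpa using hn
    have h2 := (ENNReal.ofReal_lt_ofReal_iff'.mp h1).1
    rw [div_lt_iff₀ hn0] at h2
    linarith
  have hcinv : 1 / c ≤ Real.exp (n * a) := by
    rw [one_div, ← Real.exp_log hp, ← Real.exp_neg]
    exact Real.exp_le_exp.mpr hlog.le
  have hbd : (K / c) ^ s ≤ K ^ s * Real.exp (s * a) ^ n := by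
    calc (K / c) ^ s ≤ (K * Real.exp (n * a)) ^ s := by
          apply Real.rpow_le_rpow (by positivity) _ hs0.le
          rw [div_eq_mul_one_div]
          gcongr
      _ = K ^ s * Real.exp (s * a) ^ n := by
          rw [Real.mul_rpow hK.le (Real.exp_pos _).le, ← Real.exp_mul, ← Real.exp_nat_mul]
          ring_nf
  calc ENNReal.ofReal ((K / c) ^ s) * Φ ^ n
      ≤ ENNReal.ofReal (K ^ s * Real.exp (s * a) ^ n) * Φ ^ n := by
        gcongr
    _ = ENNReal.ofReal (K ^ s) * q ^ n := by
        rw [ENNReal.ofReal_mul (by positivity), ENNReal.ofReal_pow (Real.exp_pos _).le, hq,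
          mul_pow, mul_assoc]

lemma cascade_on_bounded {b : ℕ} {Ω : Type*} [MeasurableSpace Ω] {P : Measure Ω}
    [IsProbabilityMeasure P]
    {X : List (Fin b) → Ω → ℝ} {X₀ : Ω → ℝ} (hM : CascadeM1 P X X₀)
    (ν : Measure (SymbSpace b)) [IsProbabilityMeasure ν] {K : ℝ} (hK : 0 < K)
    (hx : ∀ᵐ x ∂ν, lowerLocalDim ν x < entropyX P X₀) :
    ∀ᵐ ω ∂P, (∀ n, cascadeZ X ν n ω ≤ K) →
      liminf (fun n => ENNReal.ofReal (cascadeZ X ν n ω)) atTop = 0 := by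
  have hA := measurableSet_bounded hM ν K
  set A := {ω | ∀ n, cascadeZ X ν n ω ≤ K} with hAdef
  have hlim : Tendsto (fun N => ∫⁻ x, ∫⁻ ω in A,
      ENNReal.ofReal (cascadeY X (wordPrefix x N) ω) ∂P ∂ν) atTop (nhds (∫⁻ _, 0 ∂ν)) := by
    refine tendsto_lintegral_of_dominated_convergence (fun _ => 1)
      (fun N => measurable_words N
        (fun w => ∫⁻ ω in A, ENNReal.ofReal (cascadeY X w ω) ∂P)) ?_ (by simp) ?_
    · intro N
      refine ae_of_all _ fun x => ?_
      exact (setLIntegral_le_lintegral _ _).trans (lintegral_cascadeY hM x N).le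
    · filter_upwards [hx, ae_cylinder_pos ν] with x hx hpos
      exact cascade_pointwise hM ν x hK hpos hx
  have heq : ∀ N, ∫⁻ x, ∫⁻ ω in A, ENNReal.ofReal (cascadeY X (wordPrefix x N) ω) ∂P ∂ν
      = ∫⁻ ω in A, ENNReal.ofReal (cascadeZ X ν N ω) ∂P := by
    intro N
    rw [lintegral_words ν N (fun w => ∫⁻ ω in A, ENNReal.ofReal (cascadeY X w ω) ∂P)]
    simp_rw [ofReal_cascadeZ hM ν N]
    rw [lintegral_finsetSum _
      (fun u _ => (cascadeY_measurable hM _).ennreal_ofReal.mul_const _)]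
    refine Finset.sum_congr rfl fun u _ => ?_
    rw [lintegral_mul_const _ (cascadeY_measurable hM _).ennreal_ofReal]
  simp_rw [heq, lintegral_zero] at hlim
  have hmeas : ∀ n, Measurable fun ω => ENNReal.ofReal (cascadeZ X ν n ω) :=
    fun n => (cascadeZ_measurable hM ν n).ennreal_ofReal
  have hF := lintegral_liminf_le (μ := P.restrict A) (u := atTop) hmeas
  rw [hlim.liminf_eq, nonpos_iff_eq_zero,
    lintegral_eq_zero_iff (Measurable.liminf hmeas)] at hF
  exact (ae_restrict_iff' hA).mp hF

lemma singular_main {b : ℕ} (hb : 2 ≤ b) {Ω : Type*} [MeasurableSpace Ω] {P : Measure Ω}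
    [IsProbabilityMeasure P]
    {X : List (Fin b) → Ω → ℝ} {X₀ : Ω → ℝ} (hM : CascadeM1 P X X₀)
    (ν : Measure (SymbSpace b)) [IsProbabilityMeasure ν]
    (hx : ∀ᵐ x ∂ν, lowerLocalDim ν x < entropyX P X₀) :
    ∀ᵐ ω ∂P, Tendsto (fun n => cascadeZ X ν n ω) atTop (nhds 0) := by
  have h : ∀ᵐ ω ∂P, ∀ K : ℕ, (∀ n, cascadeZ X ν n ω ≤ (K + 1 : ℝ)) →
      liminf (fun n => ENNReal.ofReal (cascadeZ X ν n ω)) atTop = 0 := by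
    rw [ae_all_iff]
    intro K
    exact cascade_on_bounded hM ν (by positivity) hx
  filter_upwards [h, cascade_converges hb hM ν] with ω h1 ⟨c, hc⟩
  obtain ⟨B, hB⟩ := hc.bddAbove_range
  obtain ⟨K, hKB⟩ := exists_nat_ge B
  have h2 := h1 K fun n => by
    have : cascadeZ X ν n ω ≤ B := hB ⟨n, rfl⟩
    linarith
  have h3 := ((ENNReal.continuous_ofReal.tendsto c).comp hc).liminf_eq
  have h4 : ENNReal.ofReal c = 0 := h3.symm.trans h2
  have h5 : 0 ≤ c := ge_of_tendsto' hc fun n => cascadeZ_nonneg hM ν n ω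
  have h6 : c = 0 := le_antisymm (ENNReal.ofReal_eq_zero.mp h4) h5
  rwa [h6] at hc

/-- **Theorem (sufficient condition for `Q`-singularity).** Let `Q` be a Mandelbrot
multiplicative cascade (assumption (M1)) acting on a Borel probability measure `ν` on the
symbolic space `Σ`. If for `ν`-almost every `x` the lower local dimension of `ν` at `x` is
strictly less than `h_X`, then `ν` is `Q`-singular, i.e. `Z_n → 0` almost surely. In
particular this holds if the upper Hausdorff dimension of `ν` is strictly less than `h_X`. -/
theorem singular_of_lowerLocalDim_lt_entropy
    {b : ℕ} (hb : 2 ≤ b)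
    {Ω : Type*} [MeasurableSpace Ω] (P : Measure Ω) [IsProbabilityMeasure P]
    (X : List (Fin b) → Ω → ℝ) (X₀ : Ω → ℝ)
    (hM1 : CascadeM1 P X X₀)
    (ν : Measure (SymbSpace b)) [IsProbabilityMeasure ν] :
    ((∀ᵐ x ∂ν, lowerLocalDim ν x < entropyX P X₀) →
      ∀ᵐ ω ∂P, Tendsto (fun n => cascadeZ X ν n ω) atTop (nhds 0)) ∧
    (upperHausdorffDim ν < entropyX P X₀ →
      ∀ᵐ ω ∂P, Tendsto (fun n => cascadeZ X ν n ω) atTop (nhds 0)) := by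
  refine ⟨singular_main hb hM1 ν, fun h => singular_main hb hM1 ν ?_⟩
  filter_upwards [ENNReal.ae_le_essSup (μ := ν) (lowerLocalDim ν)] with x hx
  exact lt_of_le_of_lt hx h

end
end

section
/- Assume that for ν-almost every x ∈ Σ the lower local dimension of ν at x is strictly greater than h_X. Then with probability 1, conditional on Q·ν ≠ 0, one has dim̲_H(ν) − h_X ≤ dim̲_H(Q·ν) ≤ dim̄_P(Q·ν) ≤ dim̄_P(ν) − h_X. -/
open MeasureTheory ProbabilityTheory Filter Set
open scoped ENNReal

noncomputable section

set_option linter.unusedSectionVars false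

/-- The projection to the first `n` letters. -/
def pr {b : ℕ} (n : ℕ) (x : SymbSpace b) : Fin n → Fin b := fun i => x i

/-- The cascade density. -/
def QQ {b : ℕ} {Ω : Type*} (X : List (Fin b) → Ω → ℝ) (n : ℕ) (ω : Ω) (x : SymbSpace b) : ℝ≥0∞ :=
  ENNReal.ofReal (cascadeY X (wordPrefix x n) ω)

lemma wp_eq {b : ℕ} (n : ℕ) (x : SymbSpace b) : wordPrefix x n = List.ofFn (pr n x) := rfl

lemma measurable_pr {b : ℕ} (n : ℕ) : Measurable (pr (b := b) n) := by
  unfold pr; fun_prop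

lemma cyl_ofFn {b n : ℕ} (u : Fin n → Fin b) : cylinder (List.ofFn u) = pr n ⁻¹' {u} := by
  ext x
  change (∀ i : Fin (List.ofFn u).length, x i = (List.ofFn u).get i) ↔ pr n x = u
  constructor
  · intro h
    funext i
    have := h ⟨i, by simp⟩
    simpa [pr] using this
  · rintro rfl i
    simp [pr]

lemma cyl_wp {b n : ℕ} (x : SymbSpace b) : cylinder (wordPrefix x n) = pr n ⁻¹' {pr n x} :=
  cyl_ofFn _

lemma measurableSet_cyl {b : ℕ} (w : List (Fin b)) : MeasurableSet (cylinder w) := by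
  have := cyl_ofFn (fun i => w.get i)
  rw [List.ofFn_get] at this
  rw [this]
  exact measurable_pr _ (measurableSet_singleton _)

lemma wp_take {b : ℕ} (x : SymbSpace b) {k m : ℕ} (h : k ≤ m) :
    (wordPrefix x m).take k = wordPrefix x k := by
  apply List.ext_getElem
  · simp [wordPrefix, h]
  · intro i h1 h2
    simp [wordPrefix]

lemma wp_length {b : ℕ} (x : SymbSpace b) (m : ℕ) : (wordPrefix x m).length = m := by
  simp [wordPrefix]

lemma wp_ne_nil {b : ℕ} (x : SymbSpace b) (k : ℕ) : wordPrefix x (k+1) ≠ [] := by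
  intro h
  have := congrArg List.length h
  simp [wp_length] at this

lemma cascadeY_wp {b : ℕ} {Ω : Type*} (X : List (Fin b) → Ω → ℝ) (x : SymbSpace b) (m : ℕ) (ω : Ω) :
    cascadeY X (wordPrefix x m) ω = ∏ k ∈ Finset.range m, X (wordPrefix x (k+1)) ω := by
  unfold cascadeY
  rw [wp_length]
  apply Finset.prod_congr rfl
  intro k hk
  rw [wp_take x (by simpa using hk)]

lemma wp_eq_iff {b : ℕ} (x y : SymbSpace b) (n : ℕ) :
    wordPrefix x n = wordPrefix y n ↔ ∀ i < n, x i = y i := by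
  rw [wp_eq, wp_eq, List.ofFn_inj]
  constructor
  · intro h i hi
    exact congrFun h ⟨i, hi⟩
  · intro h
    funext i
    exact h i i.2

lemma meas_joint {b : ℕ} {Ω β : Type*} [MeasurableSpace Ω] [MeasurableSpace β]
    (f : Ω → List (Fin b) → β) (hf : ∀ w, Measurable (fun ω => f ω w)) (n : ℕ) :
    Measurable (fun p : Ω × SymbSpace b => f p.1 (wordPrefix p.2 n)) := by
  have h : Measurable (fun p : Ω × (Fin n → Fin b) => f p.1 (List.ofFn p.2)) :=
    measurable_from_prod_countable_left fun u => hf (List.ofFn u)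
  exact h.comp (measurable_fst.prodMk ((measurable_pr n).comp measurable_snd))

section
variable {b : ℕ} {Ω : Type*} [MeasurableSpace Ω] {P : Measure Ω}
    {X : List (Fin b) → Ω → ℝ} {X₀ : Ω → ℝ}

lemma meas_cascadeY (hM1 : CascadeM1 P X X₀) (w : List (Fin b)) :
    Measurable (cascadeY X w) := by
  unfold cascadeY
  exact Finset.measurable_prod _ fun i _ => hM1.meas _

lemma meas_QQ (hM1 : CascadeM1 P X X₀) (n : ℕ) :
    Measurable (fun p : Ω × SymbSpace b => QQ X n p.1 p.2) := by
  unfold QQ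
  exact meas_joint (fun ω w => ENNReal.ofReal (cascadeY X w ω))
    (fun w => (meas_cascadeY hM1 w).ennreal_ofReal) n

lemma QQ_eq (hM1 : CascadeM1 P X X₀) (n : ℕ) (ω : Ω) (x : SymbSpace b) :
    QQ X n ω x = ∏ k ∈ Finset.range n, ENNReal.ofReal (X (wordPrefix x (k+1)) ω) := by
  unfold QQ
  rw [cascadeY_wp, ENNReal.ofReal_prod_of_nonneg]
  intro i _
  exact hM1.nonneg _ _

variable [IsProbabilityMeasure P]

lemma lint_X₀ (hM1 : CascadeM1 P X X₀) : ∫⁻ ω, ENNReal.ofReal (X₀ ω) ∂P = 1 := by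
  have hi : Integrable X₀ P := by
    by_contra h
    have := hM1.mean₀
    rw [integral_undef h] at this
    norm_num at this
  rw [← ofReal_integral_eq_lintegral_ofReal hi (ae_of_all _ hM1.nonneg₀), hM1.mean₀]
  simp

lemma integrable_X₀_s4 (hM1 : CascadeM1 P X X₀) : Integrable X₀ P := by
  by_contra h
  have := hM1.mean₀
  rw [integral_undef h] at this
  norm_num at this

lemma lint_comp (hM1 : CascadeM1 P X X₀) (w : List (Fin b)) (hw : w ≠ []) (f : ℝ → ℝ≥0∞)
    (hf : Measurable f) : ∫⁻ ω, f (X w ω) ∂P = ∫⁻ ω, f (X₀ ω) ∂P := by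
  rw [← lintegral_map hf (hM1.meas w), ← lintegral_map hf hM1.meas₀, (hM1.ident w hw).map_eq]

/-- Independence: product formula along a finite family of distinct nonempty words. -/
lemma lint_prod (hM1 : CascadeM1 P X X₀) {ι : Type*} [Fintype ι] (g : ι → List (Fin b))
    (hg : Function.Injective g) (hne : ∀ i, g i ≠ []) (f : ι → ℝ → ℝ≥0∞) (hf : ∀ i, Measurable (f i)) :
    ∫⁻ ω, ∏ i, f i (X (g i) ω) ∂P = ∏ i, ∫⁻ ω, f i (X₀ ω) ∂P := by
  have hind : iIndepFun (fun i => X (g i)) P := by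
    have := hM1.indep.precomp (g := fun i => (⟨g i, hne i⟩ : {w : List (Fin b) // w ≠ []}))
      (by intro i j h; exact hg (by simpa using h))
    exact this
  have hind2 := hind.comp f hf
  have := lintegral_prod_eq_prod_lintegral_of_indepFun Finset.univ
    (fun i => f i ∘ X (g i)) hind2 (fun i => (hf i).comp (hM1.meas _))
  simp only [Function.comp] at this
  rw [this]
  apply Finset.prod_congr rfl
  intro i _
  exact lint_comp hM1 _ (hne i) _ (hf i)

lemma lint_finset (hM1 : CascadeM1 P X X₀) (S : Finset (List (Fin b))) (hS : ∀ w ∈ S, w ≠ []) :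
    ∫⁻ ω, ∏ w ∈ S, ENNReal.ofReal (X w ω) ∂P = 1 := by
  have := lint_prod hM1 (fun i : S => i.1) Subtype.val_injective (fun i => hS i.1 i.2)
    (fun _ => ENNReal.ofReal) (fun _ => ENNReal.measurable_ofReal)
  rw [lint_X₀ hM1] at this
  simp only [Finset.prod_const_one] at this
  rw [← this]
  congr 1
  funext ω
  exact (Finset.prod_coe_sort S (fun w => ENNReal.ofReal (X w ω))).symm

lemma wp_inj (x : SymbSpace b) : Function.Injective (fun k => wordPrefix x (k+1)) := by
  intro i j h
  have := congrArg List.length h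
  simpa [wp_length] using this

lemma lint_QQ (hM1 : CascadeM1 P X X₀) (m : ℕ) (x : SymbSpace b) :
    ∫⁻ ω, QQ X m ω x ∂P = 1 := by
  simp_rw [QQ_eq hM1]
  have := lint_finset hM1 ((Finset.range m).image (fun k => wordPrefix x (k+1))) (by
    intro w hw
    obtain ⟨k, _, rfl⟩ := Finset.mem_image.1 hw
    exact wp_ne_nil x k)
  rw [← this]
  congr 1
  funext ω
  rw [Finset.prod_image]
  exact fun i _ j _ h => wp_inj x h

lemma meas_setlint (hM1 : CascadeM1 P X X₀) (ν : Measure (SymbSpace b)) [IsProbabilityMeasure ν]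
    (A : Set (Ω × SymbSpace b)) (hA : MeasurableSet A) (m : ℕ) :
    Measurable (fun ω => ∫⁻ x in {x | (ω, x) ∈ A}, QQ X m ω x ∂ν) := by
  have h1 : ∀ ω, ∫⁻ x in {x | (ω, x) ∈ A}, QQ X m ω x ∂ν
      = ∫⁻ x, A.indicator (fun p => QQ X m p.1 p.2) (ω, x) ∂ν := by
    intro ω
    have hm : MeasurableSet {x | (ω, x) ∈ A} := measurable_prodMk_left hA
    rw [← lintegral_indicator hm]
    rfl
  simp_rw [h1]
  exact ((meas_QQ hM1 m).indicator hA).lintegral_prod_right'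

lemma swap_setlint (hM1 : CascadeM1 P X X₀) (ν : Measure (SymbSpace b)) [IsProbabilityMeasure ν]
    (A : Set (Ω × SymbSpace b)) (hA : MeasurableSet A) (m : ℕ) :
    ∫⁻ ω, ∫⁻ x in {x | (ω, x) ∈ A}, QQ X m ω x ∂ν ∂P
      = ∫⁻ x, ∫⁻ ω in {ω | (ω, x) ∈ A}, QQ X m ω x ∂P ∂ν := by
  have h1 : ∀ ω, ∫⁻ x in {x | (ω, x) ∈ A}, QQ X m ω x ∂ν
      = ∫⁻ x, A.indicator (fun p => QQ X m p.1 p.2) (ω, x) ∂ν := by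
    intro ω
    have hm : MeasurableSet {x | (ω, x) ∈ A} := measurable_prodMk_left hA
    rw [← lintegral_indicator hm]
    rfl
  have h2 : ∀ x, ∫⁻ ω in {ω | (ω, x) ∈ A}, QQ X m ω x ∂P
      = ∫⁻ ω, A.indicator (fun p => QQ X m p.1 p.2) (ω, x) ∂P := by
    intro x
    have hm : MeasurableSet {ω | (ω, x) ∈ A} := measurable_prodMk_right hA
    rw [← lintegral_indicator hm]
    rfl
  simp_rw [h1, h2]
  exact lintegral_lintegral_swap ((meas_QQ hM1 m).indicator hA).aemeasurable

lemma measSet_joint (R : Ω → List (Fin b) → Prop) (hR : ∀ w, MeasurableSet {ω | R ω w}) (n : ℕ) :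
    MeasurableSet {p : Ω × SymbSpace b | R p.1 (wordPrefix p.2 n)} := by
  rw [measurableSet_setOfPred]
  exact meas_joint R (fun w => measurableSet_setOfPred.1 (hR w)) n

lemma measSet_union (R : ℕ → Ω → List (Fin b) → Prop) (hR : ∀ n w, MeasurableSet {ω | R n ω w})
    (M L : ℕ) :
    MeasurableSet {p : Ω × SymbSpace b | ∃ n, M ≤ n ∧ n ≤ L ∧ R n p.1 (wordPrefix p.2 n)} := by
  have : {p : Ω × SymbSpace b | ∃ n, M ≤ n ∧ n ≤ L ∧ R n p.1 (wordPrefix p.2 n)}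
      = ⋃ n ∈ Set.Icc M L, {p : Ω × SymbSpace b | R n p.1 (wordPrefix p.2 n)} := by
    ext p; simp [and_assoc]
  rw [this]
  exact MeasurableSet.biUnion (Set.to_countable _) fun n _ => measSet_joint (R n) (hR n) n

/-- Convergence on sets determined by finitely many letters. -/
lemma tendsto_finite_set (ν μ : Measure (SymbSpace b)) (q : ℕ → SymbSpace b → ℝ≥0∞)
    (hq : ∀ w : List (Fin b),
      Tendsto (fun n => ∫⁻ x in cylinder w, q n x ∂ν) atTop (nhds (μ (cylinder w))))
    (L : ℕ) (T : Set (Fin L → Fin b)) :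
    Tendsto (fun n => ∫⁻ x in pr L ⁻¹' T, q n x ∂ν) atTop (nhds (μ (pr L ⁻¹' T))) := by
  classical
  have hm : ∀ y ∈ T.toFinset, MeasurableSet (pr (b := b) L ⁻¹' {y}) :=
    fun y _ => measurable_pr L (measurableSet_singleton y)
  have hμ : μ (pr L ⁻¹' T) = ∑ u ∈ T.toFinset, μ (cylinder (List.ofFn u)) := by
    have := sum_measure_preimage_singleton (μ := μ) T.toFinset hm
    simp only [Set.coe_toFinset] at this
    rw [← this]
    simp_rw [cyl_ofFn]
  have hν : ∀ n, ∫⁻ x in pr L ⁻¹' T, q n x ∂ν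
      = ∑ u ∈ T.toFinset, ∫⁻ x in cylinder (List.ofFn u), q n x ∂ν := by
    intro n
    have : pr (b := b) L ⁻¹' T = ⋃ u ∈ T.toFinset, pr L ⁻¹' {u} := by
      ext x; simp
    rw [this, lintegral_biUnion_finset]
    · simp_rw [cyl_ofFn]
    · exact pairwiseDisjoint_fiber _ _
    · exact hm
  simp_rw [hμ, hν]
  exact tendsto_finsetSum _ fun u _ => hq _

lemma null_lemma (hM1 : CascadeM1 P X X₀) (ν : Measure (SymbSpace b)) [IsProbabilityMeasure ν]
    (Qν : Ω → Measure (SymbSpace b))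
    (hQν : ∀ᵐ ω ∂P, ∀ w : List (Fin b),
      Tendsto (fun n => ∫⁻ x in cylinder w, QQ X n ω x ∂ν)
        atTop (nhds (Qν ω (cylinder w))))
    (R : ℕ → ℕ → Ω → List (Fin b) → Prop) (Rinf : ℕ → Ω → List (Fin b) → Prop)
    (hmeas : ∀ m n w, MeasurableSet {ω | R m n ω w})
    (hlim : ∀ᵐ ω ∂P, ∀ n w, Rinf n ω w → ∀ᶠ m in atTop, R m n ω w)
    (hE : ∀ δ : ℝ≥0∞, δ ≠ 0 → ∃ M, ∀ L, ∀ᶠ m in atTop,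
      ∫⁻ ω, ∫⁻ x in {x | ∃ n, M ≤ n ∧ n ≤ L ∧ R m n ω (wordPrefix x n)}, QQ X m ω x ∂ν ∂P ≤ δ) :
    ∀ᵐ ω ∂P, ∀ᵐ x ∂(Qν ω), ∀ᶠ n in atTop, ¬ Rinf n ω (wordPrefix x n) := by
  let F : ℕ → ℕ → ℕ → Ω → ℝ≥0∞ := fun m M L ω =>
    ∫⁻ x in {x | ∃ n, M ≤ n ∧ n ≤ L ∧ R m n ω (wordPrefix x n)}, QQ X m ω x ∂ν
  let g : ℕ → ℕ → Ω → ℝ≥0∞ := fun M L ω => liminf (fun m => F m M L ω) atTop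
  let G : ℕ → Ω → ℝ≥0∞ := fun M ω => ⨆ L, g M L ω
  have hFm : ∀ m M L, Measurable (F m M L) := fun m M L =>
    meas_setlint hM1 ν _ (measSet_union (R m) (hmeas m) M L) m
  have hgm : ∀ M L, Measurable (g M L) := fun M L => Measurable.liminf fun m => hFm m M L
  have hGm : ∀ M, Measurable (G M) := fun M => Measurable.iSup fun L => hgm M L
  have hFmono : ∀ m M ω, Monotone (fun L => F m M L ω) := by
    intro m M ω L L' h
    apply lintegral_mono_set
    rintro x ⟨n, h1, h2, h3⟩
    exact ⟨n, h1, h2.trans h, h3⟩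
  have hgmono : ∀ M, Monotone (g M) := by
    intro M L L' h ω
    exact liminf_le_liminf (Eventually.of_forall fun m => hFmono m M ω h)
  -- the key Fatou step
  have hQ : ∀ᵐ ω ∂P, ∀ M, Qν ω {x | ∃ n, M ≤ n ∧ Rinf n ω (wordPrefix x n)} ≤ G M ω := by
    filter_upwards [hQν, hlim] with ω h1 h2 M
    let U : ℕ → Set (SymbSpace b) := fun L => {x | ∃ n, M ≤ n ∧ n ≤ L ∧ Rinf n ω (wordPrefix x n)}
    have hU : {x | ∃ n, M ≤ n ∧ Rinf n ω (wordPrefix x n)} = ⋃ L, U L := by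
      ext x
      simp only [U, mem_iUnion]
      constructor
      · rintro ⟨n, h, h'⟩; exact ⟨n, n, h, le_rfl, h'⟩
      · rintro ⟨L, n, h, _, h'⟩; exact ⟨n, h, h'⟩
    have hUmono : Monotone U := by
      rintro L L' h x ⟨n, h1, h2, h3⟩
      exact ⟨n, h1, h2.trans h, h3⟩
    rw [hU, hUmono.measure_iUnion]
    refine iSup_mono fun L => ?_
    let T : Set (Fin L → Fin b) :=
      {v | ∃ n, M ≤ n ∧ n ≤ L ∧ Rinf n ω ((List.ofFn v).take n)}
    have hUT : U L = pr L ⁻¹' T := by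
      ext x
      change (∃ n, M ≤ n ∧ n ≤ L ∧ Rinf n ω (wordPrefix x n)) ↔
        (∃ n, M ≤ n ∧ n ≤ L ∧ Rinf n ω ((wordPrefix x L).take n))
      refine exists_congr fun n => and_congr_right fun _ => and_congr_right fun h => ?_
      rw [wp_take x h]
    have ht := tendsto_finite_set ν (Qν ω) (fun n => QQ X n ω) h1 L T
    rw [hUT, ← ht.liminf_eq]
    refine liminf_le_liminf ?_
    have hev : ∀ᶠ m in atTop, ∀ n ∈ Finset.range (L+1), ∀ u : Fin n → Fin b,
        Rinf n ω (List.ofFn u) → R m n ω (List.ofFn u) := by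
      rw [Filter.eventually_all_finset]
      intro n _
      rw [Filter.eventually_all]
      intro u
      by_cases h : Rinf n ω (List.ofFn u)
      · filter_upwards [h2 n _ h] with m hm _
        exact hm
      · exact Eventually.of_forall fun m h' => absurd h' h
    filter_upwards [hev] with m hm
    apply lintegral_mono_set
    rw [← hUT]
    rintro x ⟨n, h1, h2, h3⟩
    exact ⟨n, h1, h2, hm n (by simp; omega) (pr n x) h3⟩
  have hIntg : ∫⁻ ω, ⨅ M, G M ω ∂P = 0 := by
    by_contra hne
    have hlt : ∃ δ : ℝ≥0∞, δ ≠ 0 ∧ δ < ∫⁻ ω, ⨅ M, G M ω ∂P := by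
      obtain ⟨δ, h1, h2⟩ := exists_between (pos_iff_ne_zero.2 hne)
      exact ⟨δ, h1.ne', h2⟩
    obtain ⟨δ, hδ, hlt⟩ := hlt
    obtain ⟨M, hM⟩ := hE δ hδ
    refine absurd hlt (not_lt.2 ?_)
    calc ∫⁻ ω, ⨅ M, G M ω ∂P ≤ ∫⁻ ω, G M ω ∂P := lintegral_mono fun ω => iInf_le _ M
      _ = ⨆ L, ∫⁻ ω, g M L ω ∂P := lintegral_iSup (hgm M) (hgmono M)
      _ ≤ δ := by
        refine iSup_le fun L => ?_
        calc ∫⁻ ω, g M L ω ∂P ≤ liminf (fun m => ∫⁻ ω, F m M L ω ∂P) atTop :=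
              lintegral_liminf_le fun m => hFm m M L
          _ ≤ δ := by
            refine (liminf_le_limsup).trans (limsup_le_of_le (by isBoundedDefault) (hM L))
  rw [lintegral_eq_zero_iff (Measurable.iInf fun M => hGm M)] at hIntg
  filter_upwards [hQ, hIntg] with ω h1 h2
  rw [ae_iff]
  refine le_antisymm ?_ zero_le
  have h2' : ⨅ M, G M ω = 0 := h2
  rw [← h2']
  refine le_iInf fun M => le_trans (measure_mono ?_) (h1 M)
  intro x hx
  have hx' : ¬ ∀ᶠ n in atTop, ¬ Rinf n ω (wordPrefix x n) := hx
  rw [Filter.not_eventually] at hx'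
  obtain ⟨n, hn, h⟩ := (Filter.frequently_atTop.1 hx') M
  exact ⟨n, hn, not_not.1 h⟩


lemma tail_small {α : Type*} [MeasurableSpace α] (μ : Measure α) [IsFiniteMeasure μ]
    (D : ℕ → Set α) (hD : ∀ n, MeasurableSet (D n)) (h : ∀ᵐ z ∂μ, ∀ᶠ n in atTop, z ∉ D n)
    (δ : ℝ≥0∞) (hδ : δ ≠ 0) : ∃ N, μ {z | ∃ n, N ≤ n ∧ z ∈ D n} ≤ δ := by
  let E : ℕ → Set α := fun N => {z | ∃ n, N ≤ n ∧ z ∈ D n}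
  have hE : ∀ N, MeasurableSet (E N) := by
    intro N
    have : E N = ⋃ n ∈ Set.Ici N, D n := by ext z; simp [E]
    rw [this]
    exact MeasurableSet.biUnion (Set.to_countable _) fun n _ => hD n
  have hanti : Antitone E := by
    rintro N N' h z ⟨n, h1, h2⟩
    exact ⟨n, h.trans h1, h2⟩
  have ht := tendsto_measure_iInter_atTop (μ := μ) (fun N => (hE N).nullMeasurableSet) hanti
    ⟨0, measure_ne_top _ _⟩
  have h0 : μ (⋂ N, E N) = 0 := by
    rw [ae_iff] at h
    refine measure_mono_null ?_ h
    intro z hz hz'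
    obtain ⟨N, hN⟩ := eventually_atTop.1 hz'
    obtain ⟨n, h1, h2⟩ := mem_iInter.1 hz N
    exact hN n h1 h2
  rw [h0] at ht
  obtain ⟨N, hN⟩ := (ht.eventually_le_const (pos_iff_ne_zero.2 hδ)).exists
  exact ⟨N, hN⟩

/-- The size-biased law. -/
def tiltLaw (P : Measure Ω) (X₀ : Ω → ℝ) : Measure ℝ := (P.map X₀).withDensity ENNReal.ofReal

lemma tiltLaw_apply (hM1 : CascadeM1 P X X₀) {s : Set ℝ} (hs : MeasurableSet s) :
    tiltLaw P X₀ s = ∫⁻ ω, s.indicator ENNReal.ofReal (X₀ ω) ∂P := by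
  unfold tiltLaw
  rw [withDensity_apply _ hs, ← lintegral_indicator hs,
    lintegral_map (ENNReal.measurable_ofReal.indicator hs) hM1.meas₀]

lemma tiltLaw_prob (hM1 : CascadeM1 P X X₀) : IsProbabilityMeasure (tiltLaw P X₀) := by
  constructor
  rw [tiltLaw_apply hM1 MeasurableSet.univ]
  simpa using lint_X₀ hM1

lemma tiltLaw_pos (hM1 : CascadeM1 P X X₀) : ∀ᵐ z ∂(tiltLaw P X₀), 0 < z := by
  rw [ae_iff]
  have : {z : ℝ | ¬ 0 < z} = Set.Iic 0 := by ext z; simp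
  rw [this, tiltLaw_apply hM1 measurableSet_Iic]
  have : ∀ ω, (Set.Iic (0:ℝ)).indicator ENNReal.ofReal (X₀ ω) = 0 := by
    intro ω
    simp only [indicator_apply_eq_zero, mem_Iic, ENNReal.ofReal_eq_zero, imp_self]
  simp [this]

lemma xlogx_integrable (hM1 : CascadeM1 P X X₀) (hfin : entropyX P X₀ ≠ ∞) :
    Integrable (fun ω => X₀ ω * Real.log (X₀ ω)) P ∧
    ∫ ω, X₀ ω * Real.log (X₀ ω) ∂P = (entropyX P X₀).toReal := by
  have hm : Measurable (fun ω => X₀ ω * Real.log (X₀ ω)) := by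
    have := hM1.meas₀
    fun_prop
  have hlow : ∀ ω, X₀ ω - 1 ≤ X₀ ω * Real.log (X₀ ω) := by
    intro ω
    rcases (hM1.nonneg₀ ω).eq_or_lt with h | h
    · rw [← h]; simp
    · have := Real.one_sub_inv_le_log_of_pos h
      have h2 := mul_le_mul_of_nonneg_left this h.le
      have h3 : X₀ ω * (1 - (X₀ ω)⁻¹) = X₀ ω - 1 := by field_simp
      linarith
  have hneg : ∫⁻ ω, ENNReal.ofReal (-(X₀ ω * Real.log (X₀ ω))) ∂P ≠ ∞ := by
    refine ne_top_of_le_ne_top (b := 1) (by simp) ?_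
    calc _ ≤ ∫⁻ ω, 1 ∂P := by
          refine lintegral_mono fun ω => ?_
          rw [← ENNReal.ofReal_one]
          apply ENNReal.ofReal_le_ofReal
          have := hlow ω
          have := hM1.nonneg₀ ω
          linarith
      _ = 1 := by simp
  have hpos : ∫⁻ ω, ENNReal.ofReal (X₀ ω * Real.log (X₀ ω)) ∂P ≠ ∞ := by
    intro h
    apply hfin
    unfold entropyX
    rw [h]
    exact ENNReal.top_sub hneg
  have hIntg : Integrable (fun ω => X₀ ω * Real.log (X₀ ω)) P := by
    refine ⟨hm.aestronglyMeasurable, ?_⟩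
    rw [hasFiniteIntegral_iff_norm]
    calc _ ≤ ∫⁻ ω, (ENNReal.ofReal (X₀ ω * Real.log (X₀ ω)) +
            ENNReal.ofReal (-(X₀ ω * Real.log (X₀ ω)))) ∂P := by
          refine lintegral_mono fun ω => ?_
          rw [Real.norm_eq_abs]
          rcases abs_cases (X₀ ω * Real.log (X₀ ω)) with h | h
          · rw [h.1]; exact le_self_add
          · rw [h.1]; exact le_add_self
      _ = _ := lintegral_add_left hm.ennreal_ofReal _
      _ < ∞ := ENNReal.add_lt_top.2 ⟨hpos.lt_top, hneg.lt_top⟩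
  refine ⟨hIntg, ?_⟩
  have hval := integral_eq_lintegral_pos_part_sub_lintegral_neg_part hIntg
  have hge : 0 ≤ ∫ ω, X₀ ω * Real.log (X₀ ω) ∂P := by
    have h1 : ∫ ω, (X₀ ω - 1) ∂P ≤ ∫ ω, X₀ ω * Real.log (X₀ ω) ∂P :=
      integral_mono ((integrable_X₀_s4 hM1).sub (integrable_const _)) hIntg hlow
    rw [integral_sub (integrable_X₀_s4 hM1) (integrable_const _), hM1.mean₀] at h1
    simpa using h1
  rw [hval] at hge ⊢
  unfold entropyX
  rw [ENNReal.toReal_sub_of_le _ hpos]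
  rw [← ENNReal.toReal_le_toReal hneg hpos]
  linarith

lemma tilt_log (hM1 : CascadeM1 P X X₀) (hfin : entropyX P X₀ ≠ ∞) :
    Integrable Real.log (tiltLaw P X₀) ∧
    ∫ z, Real.log z ∂(tiltLaw P X₀) = (entropyX P X₀).toReal := by
  obtain ⟨h1, h2⟩ := xlogx_integrable hM1 hfin
  have hm : Measurable (fun z : ℝ => (ENNReal.ofReal z).toReal • Real.log z) := by fun_prop
  have he : ∀ ω, (ENNReal.ofReal (X₀ ω)).toReal • Real.log (X₀ ω) = X₀ ω * Real.log (X₀ ω) := by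
    intro ω
    rw [ENNReal.toReal_ofReal (hM1.nonneg₀ ω), smul_eq_mul]
  unfold tiltLaw
  constructor
  · rw [integrable_withDensity_iff_integrable_smul' ENNReal.measurable_ofReal
      (ae_of_all _ fun z => ENNReal.ofReal_lt_top),
      integrable_map_measure hm.aestronglyMeasurable hM1.meas₀.aemeasurable]
    refine h1.congr (ae_of_all _ fun ω => (he ω).symm)
  · rw [integral_withDensity_eq_integral_toReal_smul ENNReal.measurable_ofReal
      (ae_of_all _ fun z => ENNReal.ofReal_lt_top),
      integral_map hM1.meas₀.aemeasurable hm.aestronglyMeasurable, ← h2]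
    exact integral_congr_ae (ae_of_all _ he)

/-- deviation set in sequence space -/
def devSet (h ε : ℝ) (k : ℕ) : Set (ℕ → ℝ) :=
  {z | Real.exp (k * (h + ε)) < ∏ i ∈ Finset.range k, z i ∨
    ∏ i ∈ Finset.range k, z i < Real.exp (k * (h - ε))}

lemma meas_devSet (h ε : ℝ) (k : ℕ) : MeasurableSet (devSet h ε k) := by
  have hm : Measurable (fun z : ℕ → ℝ => ∏ i ∈ Finset.range k, z i) := by fun_prop
  exact (measurableSet_lt measurable_const hm).union (measurableSet_lt hm measurable_const)

lemma slln (hM1 : CascadeM1 P X X₀) (hfin : entropyX P X₀ ≠ ∞) (ε : ℝ) (hε : 0 < ε) :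
    ∀ᵐ z ∂(Measure.infinitePi (fun _ : ℕ => tiltLaw P X₀)),
      ∀ᶠ n in atTop, z ∉ devSet (entropyX P X₀).toReal ε n := by
  have := tiltLaw_prob hM1
  obtain ⟨h1, h2⟩ := tilt_log hM1 hfin
  set P' := Measure.infinitePi (fun _ : ℕ => tiltLaw P X₀) with hP'
  have hmp : ∀ i : ℕ, MeasurePreserving (Function.eval i) P' (tiltLaw P X₀) :=
    fun i => measurePreserving_eval_infinitePi (fun _ : ℕ => tiltLaw P X₀) i
  have hs := strong_law_ae_real (μ := P') (fun (i : ℕ) (z : ℕ → ℝ) => Real.log (z i))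
    ((hmp 0).integrable_comp_of_integrable h1)
    (by
      intro i j hij
      have := iIndepFun_infinitePi (P := fun _ : ℕ => tiltLaw P X₀) (X := fun _ => Real.log)
        (fun i => Real.measurable_log)
      exact this.indepFun hij)
    (by
      intro i
      refine ⟨(Real.measurable_log.comp (measurable_pi_apply i)).aemeasurable,
        (Real.measurable_log.comp (measurable_pi_apply 0)).aemeasurable, ?_⟩
      have e : ∀ i : ℕ, Measure.map (fun z : ℕ → ℝ => Real.log (z i)) P'
          = (tiltLaw P X₀).map Real.log := by
        intro i
        rw [← (hmp i).map_eq, Measure.map_map Real.measurable_log (measurable_pi_apply i)]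
        rfl
      rw [e i, e 0])
  have hmean : ∫ z, Real.log (z 0) ∂P' = (entropyX P X₀).toReal := by
    rw [← h2, ← (hmp 0).map_eq,
      integral_map (measurable_pi_apply 0).aemeasurable Real.measurable_log.aestronglyMeasurable]
  have hpos : ∀ᵐ z ∂P', ∀ i, 0 < z i := by
    rw [ae_all_iff]
    intro i
    exact (hmp i).quasiMeasurePreserving.ae (tiltLaw_pos hM1)
  rw [hmean] at hs
  filter_upwards [hs, hpos] with z hz hp
  set h := (entropyX P X₀).toReal
  have e1 := hz.eventually_lt_const (show h < h + ε by linarith)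
  have e2 := hz.eventually_const_lt (show h - ε < h by linarith)
  filter_upwards [e1, e2, eventually_gt_atTop 0] with n a1 a2 hn
  have hn' : (0:ℝ) < n := by exact_mod_cast hn
  have hprod : ∏ i ∈ Finset.range n, z i = Real.exp (∑ i ∈ Finset.range n, Real.log (z i)) := by
    rw [Real.exp_sum]
    exact Finset.prod_congr rfl fun i _ => (Real.exp_log (hp i)).symm
  rw [div_lt_iff₀ hn'] at a1
  rw [lt_div_iff₀ hn'] at a2
  rintro (hh | hh)
  · rw [hprod, Real.exp_lt_exp] at hh
    linarith
  · rw [hprod, Real.exp_lt_exp] at hh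
    linarith

lemma tilt_pi (hM1 : CascadeM1 P X X₀) (x : SymbSpace b) (m : ℕ) :
    (P.withDensity (fun ω => QQ X m ω x)).map (fun ω (i : Fin m) => X (wordPrefix x (i+1)) ω)
      = Measure.pi (fun _ : Fin m => tiltLaw P X₀) := by
  have := tiltLaw_prob hM1
  symm
  apply Measure.pi_eq
  intro s hs
  have hV : Measurable (fun ω (i : Fin m) => X (wordPrefix x (i+1)) ω) :=
    measurable_pi_lambda _ fun i => hM1.meas _
  have hS : MeasurableSet (Set.pi univ s) := MeasurableSet.univ_pi hs
  rw [Measure.map_apply hV hS, withDensity_apply _ (hV hS), ← lintegral_indicator (hV hS)]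
  have key := lint_prod hM1 (fun i : Fin m => wordPrefix x (i+1))
    (fun i j h => Fin.ext (wp_inj x h)) (fun i => wp_ne_nil x i)
    (fun i => (s i).indicator ENNReal.ofReal) (fun i => ENNReal.measurable_ofReal.indicator (hs i))
  simp_rw [← tiltLaw_apply hM1 (hs _)] at key
  rw [← key]
  congr 1
  funext ω
  by_cases hω : ∀ i : Fin m, X (wordPrefix x (i+1)) ω ∈ s i
  · rw [indicator_of_mem (by simpa using hω), QQ_eq hM1, Finset.prod_range]
    exact Finset.prod_congr rfl fun i _ => (indicator_of_mem (hω i) _).symm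
  · rw [indicator_of_notMem (by simpa using hω)]
    push Not at hω
    obtain ⟨i, hi⟩ := hω
    rw [Finset.prod_eq_zero (Finset.mem_univ i)]
    exact indicator_of_notMem hi _

/-- deviation event for a word -/
def devW (X : List (Fin b) → Ω → ℝ) (h ε : ℝ) (k : ℕ) (ω : Ω) (w : List (Fin b)) : Prop :=
  Real.exp (k * (h + ε)) < cascadeY X w ω ∨ cascadeY X w ω < Real.exp (k * (h - ε))

lemma dev_lemma (hM1 : CascadeM1 P X X₀) (hfin : entropyX P X₀ ≠ ∞) (ε : ℝ) (hε : 0 < ε)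
    (δ : ℝ≥0∞) (hδ : δ ≠ 0) : ∃ N, ∀ (x : SymbSpace b) (m : ℕ),
    ∫⁻ ω in {ω | ∃ k, N ≤ k ∧ k ≤ m ∧ devW X (entropyX P X₀).toReal ε k ω (wordPrefix x k)},
      QQ X m ω x ∂P ≤ δ := by
  have := tiltLaw_prob hM1
  obtain ⟨N, hN⟩ := tail_small (Measure.infinitePi (fun _ : ℕ => tiltLaw P X₀))
    (devSet (entropyX P X₀).toReal ε) (meas_devSet _ _) (slln hM1 hfin ε hε) δ hδ
  refine ⟨N, fun x m => ?_⟩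
  set h := (entropyX P X₀).toReal
  let V : Ω → Fin m → ℝ := fun ω i => X (wordPrefix x (i+1)) ω
  have hV : Measurable V := measurable_pi_lambda _ fun i => hM1.meas _
  let ext : (Fin m → ℝ) → ℕ → ℝ := fun v i => if hi : i < m then v ⟨i, hi⟩ else 0
  have hext : Measurable ext := by
    refine measurable_pi_lambda _ fun i => ?_
    by_cases hi : i < m
    · simp only [ext, hi, dite_true]; exact measurable_pi_apply _
    · simp only [ext, hi, dite_false]; exact measurable_const
  let D : Set (ℕ → ℝ) := ⋃ k ∈ Set.Icc N m, devSet h ε k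
  have hD : MeasurableSet D :=
    MeasurableSet.biUnion (Set.to_countable _) fun k _ => meas_devSet _ _ _
  have hset : {ω | ∃ k, N ≤ k ∧ k ≤ m ∧ devW X h ε k ω (wordPrefix x k)} = V ⁻¹' (ext ⁻¹' D) := by
    ext ω
    change (∃ k, N ≤ k ∧ k ≤ m ∧ devW X h ε k ω (wordPrefix x k)) ↔ ext (V ω) ∈ D
    simp only [D, mem_iUnion, exists_prop, mem_Icc, and_assoc]
    refine exists_congr fun k => and_congr_right fun _ => and_congr_right fun hk => ?_
    have : ∏ i ∈ Finset.range k, ext (V ω) i = cascadeY X (wordPrefix x k) ω := by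
      rw [cascadeY_wp]
      refine Finset.prod_congr rfl fun i hi => ?_
      have : i < m := by simp at hi; omega
      simp [ext, this, V]
    simp only [devW, devSet]
    change _ ↔ (_ ∨ _)
    rw [this]
  rw [hset, ← withDensity_apply _ (hV (hext hD)), ← Measure.map_apply hV (hext hD), tilt_pi hM1 x m,
    ← Measure.infinitePi_eq_pi]
  have hr := Measure.map_infinitePi_infinitePi_of_inj (P := fun _ : ℕ => tiltLaw P X₀)
    (f := fun i : Fin m => (i : ℕ)) Fin.val_injective
  rw [← hr, Measure.map_apply (by fun_prop) (hext hD)]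
  refine (measure_mono ?_).trans hN
  intro z hz
  have hz' : ext (fun i : Fin m => z i) ∈ D := hz
  simp only [D, mem_iUnion, exists_prop, mem_Icc, and_assoc] at hz'
  obtain ⟨k, h1, h2, h3⟩ := hz'
  refine ⟨k, h1, ?_⟩
  have : ∏ i ∈ Finset.range k, ext (fun i : Fin m => z i) i = ∏ i ∈ Finset.range k, z i := by
    refine Finset.prod_congr rfl fun i hi => ?_
    have : i < m := by simp at hi; omega
    simp [ext, this]
  change _ ∨ _
  rw [← this]
  exact h3


lemma meas_cylint (hM1 : CascadeM1 P X X₀) (ν : Measure (SymbSpace b)) [IsProbabilityMeasure ν]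
    (m : ℕ) (w : List (Fin b)) : Measurable (fun ω => ∫⁻ x in cylinder w, QQ X m ω x ∂ν) :=
  (meas_QQ hM1 m).lintegral_prod_right'

lemma meas_wp_set (S : List (Fin b) → Prop) (n : ℕ) :
    MeasurableSet {x : SymbSpace b | S (wordPrefix x n)} := by
  have : {x : SymbSpace b | S (wordPrefix x n)} = pr n ⁻¹' {u | S (List.ofFn u)} := rfl
  rw [this]
  exact measurable_pr n (Set.to_countable _).measurableSet

open Classical in
lemma split_lint (ν : Measure (SymbSpace b)) (S : List (Fin b) → Prop) (n : ℕ)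
    (f : SymbSpace b → ℝ≥0∞) :
    ∫⁻ x in {x | S (wordPrefix x n)}, f x ∂ν
      = ∑ u : Fin n → Fin b with S (List.ofFn u), ∫⁻ x in cylinder (List.ofFn u), f x ∂ν := by
  have : {x : SymbSpace b | S (wordPrefix x n)}
      = ⋃ u ∈ (Finset.univ.filter (fun u : Fin n → Fin b => S (List.ofFn u))), pr n ⁻¹' {u} := by
    ext x
    simp only [Finset.mem_filter, Finset.mem_univ, true_and, mem_iUnion, mem_preimage,
      mem_singleton_iff, exists_prop, exists_eq_right']
    rfl
  rw [this, lintegral_biUnion_finset]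
  · simp_rw [cyl_ofFn]
  · exact pairwiseDisjoint_fiber _ _
  · exact fun y _ => measurable_pr n (measurableSet_singleton y)

lemma split_lint_univ (ν : Measure (SymbSpace b)) (n : ℕ)
    (f : SymbSpace b → ℝ≥0∞) :
    ∫⁻ x, f x ∂ν = ∑ u : Fin n → Fin b, ∫⁻ x in cylinder (List.ofFn u), f x ∂ν := by
  have := split_lint ν (fun _ => True) n f
  simpa using this

lemma cyl_lint_QQ (ν : Measure (SymbSpace b)) (n : ℕ) (u : Fin n → Fin b) (ω : Ω) :
    ∫⁻ x in cylinder (List.ofFn u), QQ X n ω x ∂ν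
      = ENNReal.ofReal (cascadeY X (List.ofFn u) ω) * ν (cylinder (List.ofFn u)) := by
  rw [← setLIntegral_const]
  apply setLIntegral_congr_fun (measurableSet_cyl _)
  intro x hx
  rw [cyl_ofFn] at hx
  have hx' : pr n x = u := hx
  simp only [QQ]
  rw [wp_eq, hx']

lemma lint_lint_QQ (hM1 : CascadeM1 P X X₀) (ν : Measure (SymbSpace b)) [SFinite ν]
    (m : ℕ) : ∫⁻ ω, ∫⁻ x, QQ X m ω x ∂ν ∂P = ν univ := by
  rw [lintegral_lintegral_swap (meas_QQ hM1 m).aemeasurable]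
  simp [lint_QQ hM1]

lemma tsum_tail (f : ℕ → ℝ≥0∞) (hf : ∑' n, f n ≠ ∞) (δ : ℝ≥0∞) (hδ : δ ≠ 0) (N : ℕ) :
    ∃ M, N ≤ M ∧ ∀ L, ∑ n ∈ Finset.Icc M L, f n ≤ δ := by
  have ht := ENNReal.tendsto_sum_nat_add f hf
  obtain ⟨M, hM, hN⟩ := ((ht.eventually_le_const (pos_iff_ne_zero.2 hδ)).and
    (eventually_ge_atTop N)).exists
  refine ⟨M, hN, fun L => le_trans ?_ hM⟩
  calc ∑ n ∈ Finset.Icc M L, f n ≤ ∑ n ∈ Finset.Ico M (L+1+M), f n := by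
        apply Finset.sum_le_sum_of_subset
        intro n
        simp only [Finset.mem_Icc, Finset.mem_Ico]
        omega
    _ = ∑ k ∈ Finset.range (L+1), f (k + M) := by
        rw [Finset.sum_Ico_eq_sum_range]
        simp [add_comm]
    _ ≤ _ := ENNReal.sum_le_tsum _

lemma tsum_exp (C a : ℝ) (hC : 0 ≤ C) (ha : 0 < a) :
    ∑' n : ℕ, ENNReal.ofReal (C * Real.exp (-(n * a))) ≠ ∞ := by
  have hs : Summable (fun n : ℕ => C * Real.exp (-(n * a))) := by
    apply Summable.mul_left
    have h : ∀ n : ℕ, Real.exp (-(n * a)) = (Real.exp (-a))^n := by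
      intro n
      rw [← Real.exp_nat_mul]; ring_nf
    simp_rw [h]
    exact summable_geometric_of_lt_one (Real.exp_pos _).le (by simpa using ha)
  rw [← ENNReal.ofReal_tsum_of_nonneg (fun n => by positivity) hs]
  exact ENNReal.ofReal_ne_top

lemma union_le (ν : Measure (SymbSpace b)) (R : ℕ → List (Fin b) → Prop) (M L : ℕ)
    (f : SymbSpace b → ℝ≥0∞) :
    ∫⁻ x in {x | ∃ n, M ≤ n ∧ n ≤ L ∧ R n (wordPrefix x n)}, f x ∂ν
      ≤ ∑ n ∈ Finset.Icc M L, ∫⁻ x in {x | R n (wordPrefix x n)}, f x ∂ν := by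
  have : {x : SymbSpace b | ∃ n, M ≤ n ∧ n ≤ L ∧ R n (wordPrefix x n)}
      = ⋃ n : (Finset.Icc M L), {x | R n (wordPrefix x n)} := by
    ext x; simp [and_assoc]
  rw [this]
  refine (lintegral_iUnion_le _ _).trans ?_
  rw [tsum_fintype]
  exact (Finset.sum_coe_sort (Finset.Icc M L)
    (fun n => ∫⁻ x in {x | R n (wordPrefix x n)}, f x ∂ν)).le

lemma transfer (hM1 : CascadeM1 P X X₀) (ν : Measure (SymbSpace b)) [IsProbabilityMeasure ν]
    (Qν : Ω → Measure (SymbSpace b))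
    (hQν : ∀ᵐ ω ∂P, ∀ w : List (Fin b),
      Tendsto (fun n => ∫⁻ x in cylinder w, QQ X n ω x ∂ν)
        atTop (nhds (Qν ω (cylinder w))))
    (D : ℕ → List (Fin b) → Prop)
    (h : ∀ᵐ x ∂ν, ∀ᶠ n in atTop, ¬ D n (wordPrefix x n)) :
    ∀ᵐ ω ∂P, ∀ᵐ x ∂(Qν ω), ∀ᶠ n in atTop, ¬ D n (wordPrefix x n) := by
  refine null_lemma hM1 ν Qν hQν (fun _ n _ w => D n w) (fun n _ w => D n w)
    (fun m n w => MeasurableSet.const _)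
    (ae_of_all _ fun ω n w h => Eventually.of_forall fun _ => h) ?_
  intro δ hδ
  obtain ⟨M, hM⟩ := tail_small ν (fun n => {x | D n (wordPrefix x n)})
    (fun n => meas_wp_set (D n) n) h δ hδ
  refine ⟨M, fun L => Eventually.of_forall fun m => ?_⟩
  calc _ ≤ ∫⁻ ω, ∫⁻ x in {z | ∃ n, M ≤ n ∧ z ∈ {x | D n (wordPrefix x n)}}, QQ X m ω x ∂ν ∂P := by
        refine lintegral_mono fun ω => lintegral_mono_set ?_
        rintro x ⟨n, h1, h2, h3⟩
        exact ⟨n, h1, h3⟩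
    _ ≤ δ := by
        rw [lint_lint_QQ hM1]
        simpa using hM

lemma lower_mass (hM1 : CascadeM1 P X X₀) (ν : Measure (SymbSpace b)) [IsProbabilityMeasure ν]
    (Qν : Ω → Measure (SymbSpace b))
    (hQν : ∀ᵐ ω ∂P, ∀ w : List (Fin b),
      Tendsto (fun n => ∫⁻ x in cylinder w, QQ X n ω x ∂ν)
        atTop (nhds (Qν ω (cylinder w))))
    (ε : ℝ) (hε : 0 < ε) :
    ∀ᵐ ω ∂P, ∀ᵐ x ∂(Qν ω), ∀ᶠ n : ℕ in atTop,
      ¬ (Qν ω (cylinder (wordPrefix x n)) < ENNReal.ofReal (Real.exp (-(n * ε))) *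
        (ENNReal.ofReal (cascadeY X (wordPrefix x n) ω) * ν (cylinder (wordPrefix x n)))) := by
  refine null_lemma hM1 ν Qν hQν
    (fun m n ω w => ∫⁻ x in cylinder w, QQ X m ω x ∂ν < ENNReal.ofReal (Real.exp (-(n * ε))) *
        (ENNReal.ofReal (cascadeY X w ω) * ν (cylinder w)))
    (fun n ω w => Qν ω (cylinder w) < ENNReal.ofReal (Real.exp (-(n * ε))) *
        (ENNReal.ofReal (cascadeY X w ω) * ν (cylinder w))) ?_ ?_ ?_
  · intro m n w
    refine measurableSet_lt (meas_cylint hM1 ν m w) ?_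
    exact ((meas_cascadeY hM1 w).ennreal_ofReal.mul_const _).const_mul _
  · filter_upwards [hQν] with ω hω n w h
    exact (hω w).eventually_lt_const h
  · intro δ hδ
    obtain ⟨M, -, hM⟩ := tsum_tail _ (tsum_exp 1 ε zero_le_one hε) δ hδ 0
    refine ⟨M, fun L => Eventually.of_forall fun m => le_trans ?_ (hM L)⟩
    calc _ ≤ ∫⁻ ω, ∑ n ∈ Finset.Icc M L, ENNReal.ofReal (1 * Real.exp (-(n * ε))) *
          ∫⁻ x, QQ X n ω x ∂ν ∂P := by
          refine lintegral_mono fun ω => ?_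
          refine (union_le ν (fun n w => ∫⁻ x in cylinder w, QQ X m ω x ∂ν <
            ENNReal.ofReal (Real.exp (-(n * ε))) *
            (ENNReal.ofReal (cascadeY X w ω) * ν (cylinder w))) M L _).trans ?_
          refine Finset.sum_le_sum fun n _ => ?_
          classical
          rw [split_lint_univ ν n (fun x => QQ X n ω x), Finset.mul_sum]
          refine (split_lint ν (fun w => ∫⁻ x in cylinder w, QQ X m ω x ∂ν <
            ENNReal.ofReal (Real.exp (-(n * ε))) *
            (ENNReal.ofReal (cascadeY X w ω) * ν (cylinder w))) n _).le.trans ?_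
          refine (Finset.sum_le_sum (g := fun u : Fin n → Fin b =>
            ENNReal.ofReal (1 * Real.exp (-(n * ε))) *
              ∫⁻ x in cylinder (List.ofFn u), QQ X n ω x ∂ν) ?_).trans
            (Finset.sum_le_sum_of_subset (Finset.subset_univ _))
          intro u hu
          have := (((@Finset.mem_filter _ _ (_) _ _).1 hu)).2
          rw [cyl_lint_QQ, one_mul]
          exact this.le
      _ = ∑ n ∈ Finset.Icc M L, ENNReal.ofReal (1 * Real.exp (-(n * ε))) := by
          rw [lintegral_finsetSum]
          · refine Finset.sum_congr rfl fun n _ => ?_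
            rw [lintegral_const_mul, lint_lint_QQ hM1]
            · simp
            · exact (meas_QQ hM1 n).lintegral_prod_right'
          · intro n _
            exact (meas_QQ hM1 n).lintegral_prod_right'.const_mul _

lemma meas_devW (hM1 : CascadeM1 P X X₀) (h ε : ℝ) (n : ℕ) (w : List (Fin b)) : MeasurableSet {ω | devW X h ε n ω w} := by
  have := meas_cascadeY hM1 w
  exact (measurableSet_lt measurable_const this).union (measurableSet_lt this measurable_const)

lemma dev_ae (hM1 : CascadeM1 P X X₀) (ν : Measure (SymbSpace b)) [IsProbabilityMeasure ν]
    (Qν : Ω → Measure (SymbSpace b))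
    (hQν : ∀ᵐ ω ∂P, ∀ w : List (Fin b),
      Tendsto (fun n => ∫⁻ x in cylinder w, QQ X n ω x ∂ν)
        atTop (nhds (Qν ω (cylinder w))))
    (hfin : entropyX P X₀ ≠ ∞) (ε : ℝ) (hε : 0 < ε) :
    ∀ᵐ ω ∂P, ∀ᵐ x ∂(Qν ω), ∀ᶠ n : ℕ in atTop,
      ¬ devW X (entropyX P X₀).toReal ε n ω (wordPrefix x n) := by
  refine null_lemma hM1 ν Qν hQν (fun _ n ω w => devW X (entropyX P X₀).toReal ε n ω w)
    (fun n ω w => devW X (entropyX P X₀).toReal ε n ω w)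
    (fun m n w => meas_devW hM1 _ _ _ _)
    (ae_of_all _ fun ω n w h => Eventually.of_forall fun _ => h) ?_
  intro δ hδ
  obtain ⟨N, hN⟩ := dev_lemma hM1 hfin ε hε δ hδ
  refine ⟨N, fun L => ?_⟩
  filter_upwards [eventually_ge_atTop L] with m hm
  have hsw := swap_setlint hM1 ν _ (measSet_union (devW X (entropyX P X₀).toReal ε)
    (fun n w => meas_devW hM1 _ _ n w) N L) m
  refine (le_of_eq hsw).trans ?_
  calc _ ≤ ∫⁻ x, δ ∂ν := by
        refine lintegral_mono fun x => ?_
        refine le_trans (lintegral_mono_set ?_) (hN x m)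
        rintro ω ⟨k, h1, h2, h3⟩
        exact ⟨k, h1, h2.trans hm, h3⟩
    _ = δ := by simp


/-- The bad event at a word: the cascade weight or the `ν`-mass is too large. -/
def badW (X : List (Fin b) → Ω → ℝ) (ν : Measure (SymbSpace b)) (a t : ℝ) (k : ℕ) (ω : Ω)
    (w : List (Fin b)) : Prop :=
  Real.exp (k * a) < cascadeY X w ω ∨ ENNReal.ofReal (Real.exp (-(k * t))) < ν (cylinder w)

lemma meas_badW (hM1 : CascadeM1 P X X₀) (ν : Measure (SymbSpace b)) (a t : ℝ) (k : ℕ)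
    (w : List (Fin b)) : MeasurableSet {ω | badW X ν a t k ω w} :=
  (measurableSet_lt measurable_const (meas_cascadeY hM1 w)).union (MeasurableSet.const _)

def badSet (X : List (Fin b) → Ω → ℝ) (ν : Measure (SymbSpace b)) (a t : ℝ) (N m : ℕ) :
    Set (Ω × SymbSpace b) :=
  {p | ∃ k, N ≤ k ∧ k ≤ m ∧ badW X ν a t k p.1 (wordPrefix p.2 k)}

lemma meas_badSet (hM1 : CascadeM1 P X X₀) (ν : Measure (SymbSpace b)) (a t : ℝ) (N m : ℕ) :
    MeasurableSet (badSet X ν a t N m) :=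
  measSet_union (badW X ν a t) (meas_badW hM1 ν a t) N m

def gg (X : List (Fin b) → Ω → ℝ) (ν : Measure (SymbSpace b)) (a t : ℝ) (N m : ℕ) :
    Ω × SymbSpace b → ℝ≥0∞ :=
  (badSet X ν a t N m)ᶜ.indicator (fun p => QQ X m p.1 p.2)

lemma meas_gg (hM1 : CascadeM1 P X X₀) (ν : Measure (SymbSpace b)) (a t : ℝ) (N m : ℕ) :
    Measurable (gg X ν a t N m) :=
  (meas_QQ hM1 m).indicator (meas_badSet hM1 ν a t N m).compl

lemma gg_le (ν : Measure (SymbSpace b)) (a t : ℝ) (N m : ℕ) (p : Ω × SymbSpace b) :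
    gg X ν a t N m p ≤ QQ X m p.1 p.2 := Set.indicator_le_self _ _ p

open Classical in
lemma second_moment_pt (hM1 : CascadeM1 P X X₀) (ν : Measure (SymbSpace b)) (a t : ℝ) (N m n : ℕ)
    (hNn : N ≤ n) (hnm : n ≤ m) (x y : SymbSpace b) (hxy : wordPrefix x n = wordPrefix y n) :
    ∫⁻ ω, gg X ν a t N m (ω, x) * gg X ν a t N m (ω, y) ∂P
      ≤ ∑ k ∈ Finset.Icc n m, ENNReal.ofReal (Real.exp (k * a)) *
        (if wordPrefix x k = wordPrefix y k ∧
          ν (cylinder (wordPrefix x k)) ≤ ENNReal.ofReal (Real.exp (-(k * t))) then 1 else 0) := by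
  let p : ℕ → Prop := fun k => wordPrefix x k = wordPrefix y k
  set k := Nat.findGreatest p m with hk
  have hkm : k ≤ m := Nat.findGreatest_le m
  have hnk : n ≤ k := Nat.le_findGreatest hnm hxy
  have hpk : wordPrefix x k = wordPrefix y k := Nat.findGreatest_spec (P := p) hnm hxy
  have hgt : ∀ j, k < j → j ≤ m → wordPrefix x j ≠ wordPrefix y j := fun j h1 h2 =>
    Nat.findGreatest_is_greatest (P := p) h1 h2
  by_cases hν : ν (cylinder (wordPrefix x k)) ≤ ENNReal.ofReal (Real.exp (-(k * t)))
  · refine le_trans ?_ (Finset.single_le_sum (fun _ _ => zero_le) (Finset.mem_Icc.2 ⟨hnk, hkm⟩))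
    rw [if_pos ⟨hpk, hν⟩, mul_one]
    let fx : ℕ → List (Fin b) := fun j => wordPrefix x (j+1)
    let fy : ℕ → List (Fin b) := fun j => wordPrefix y (j+1)
    have ifx : Function.Injective fx := by
      intro i j hij
      have := congrArg List.length hij
      simpa [fx, wp_length] using this
    have ify : Function.Injective fy := by
      intro i j hij
      have := congrArg List.length hij
      simpa [fy, wp_length] using this
    let S : Finset (List (Fin b)) := (Finset.range m).image fx ∪ (Finset.Ico k m).image fy
    have hdisj : Disjoint ((Finset.range m).image fx) ((Finset.Ico k m).image fy) := by
      rw [Finset.disjoint_left]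
      intro w h1 h2
      obtain ⟨i, hi, rfl⟩ := Finset.mem_image.1 h1
      obtain ⟨j, hj, hij⟩ := Finset.mem_image.1 h2
      have hl := congrArg List.length hij
      simp only [fx, fy, wp_length] at hl
      have : j = i := by omega
      subst this
      rw [Finset.mem_Ico] at hj
      exact hgt (j+1) (by omega) (by omega) hij.symm
    have hS : ∀ w ∈ S, w ≠ [] := by
      intro w hw h0
      rcases Finset.mem_union.1 hw with h | h <;> obtain ⟨i, hi, rfl⟩ := Finset.mem_image.1 h <;>
      · have := congrArg List.length h0
        simp [fx, fy, wp_length] at this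
    calc _ ≤ ∫⁻ ω, ENNReal.ofReal (Real.exp (k * a)) * ∏ w ∈ S, ENNReal.ofReal (X w ω) ∂P := by
          refine lintegral_mono fun ω => ?_
          have hprod : ∏ w ∈ S, ENNReal.ofReal (X w ω) = QQ X m ω x *
              ∏ j ∈ Finset.Ico k m, ENNReal.ofReal (X (wordPrefix y (j+1)) ω) := by
            rw [Finset.prod_union hdisj, Finset.prod_image ifx.injOn, Finset.prod_image ify.injOn,
              QQ_eq hM1]
          have hy : gg X ν a t N m (ω, y) ≤ ENNReal.ofReal (Real.exp (k * a)) *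
              ∏ j ∈ Finset.Ico k m, ENNReal.ofReal (X (wordPrefix y (j+1)) ω) := by
            by_cases hb : (ω, y) ∈ badSet X ν a t N m
            · have : gg X ν a t N m (ω, y) = 0 := Set.indicator_of_notMem (by simpa using hb) _
              rw [this]; exact zero_le
            · refine (gg_le ν a t N m _).trans ?_
              have h1 : QQ X k ω y ≤ ENNReal.ofReal (Real.exp (k * a)) := by
                refine ENNReal.ofReal_le_ofReal ?_
                by_contra hc
                exact hb ⟨k, hNn.trans hnk, hkm, Or.inl (not_le.1 hc)⟩
              change QQ X m ω y ≤ _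
              rw [QQ_eq hM1, ← Finset.prod_range_mul_prod_Ico _ hkm, ← QQ_eq hM1]
              gcongr
          rw [hprod]
          calc _ ≤ QQ X m ω x * (ENNReal.ofReal (Real.exp (k * a)) *
              ∏ j ∈ Finset.Ico k m, ENNReal.ofReal (X (wordPrefix y (j+1)) ω)) :=
                mul_le_mul' (gg_le ν a t N m _) hy
            _ = _ := by ring
      _ = ENNReal.ofReal (Real.exp (k * a)) := by
          rw [lintegral_const_mul, lint_finset hM1 S hS, mul_one]
          exact Finset.measurable_fun_prod _ fun w _ => (hM1.meas w).ennreal_ofReal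
  · have h0 : ∀ ω, gg X ν a t N m (ω, x) = 0 := by
      intro ω
      refine Set.indicator_of_notMem ?_ _
      intro hc
      exact hc ⟨k, hNn.trans hnk, hkm, Or.inr (not_le.1 hν)⟩
    simp [h0]

lemma second_moment (hM1 : CascadeM1 P X X₀) (ν : Measure (SymbSpace b)) [IsProbabilityMeasure ν]
    (a t : ℝ) (N m n : ℕ) (hNn : N ≤ n) (hnm : n ≤ m) :
    ∫⁻ ω, ∫⁻ x, gg X ν a t N m (ω, x) *
        ∫⁻ y in cylinder (wordPrefix x n), gg X ν a t N m (ω, y) ∂ν ∂ν ∂P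
      ≤ ∑ k ∈ Finset.Icc n m, ENNReal.ofReal (Real.exp (k * a)) *
        ENNReal.ofReal (Real.exp (-(k * t))) := by
  classical
  set g := gg X ν a t N m with hg
  have hgm : Measurable g := meas_gg hM1 ν a t N m
  let E : ℕ → Set (SymbSpace b × SymbSpace b) := fun k => {p | wordPrefix p.1 k = wordPrefix p.2 k}
  have hE : ∀ k, MeasurableSet (E k) := fun k => by
    have : E k = (fun p : SymbSpace b × SymbSpace b => (pr k p.1, pr k p.2)) ⁻¹'
      {q | List.ofFn q.1 = List.ofFn q.2} := rfl
    rw [this]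
    exact ((measurable_pr k).comp measurable_fst).prodMk ((measurable_pr k).comp measurable_snd)
      (Set.to_countable _).measurableSet
  let F : Ω × (SymbSpace b × SymbSpace b) → ℝ≥0∞ := fun p =>
    (E n).indicator (fun q => g (p.1, q.1) * g (p.1, q.2)) p.2
  have hF : Measurable F := by
    have : F = (Prod.snd ⁻¹' (E n)).indicator
        (fun p : Ω × (SymbSpace b × SymbSpace b) => g (p.1, p.2.1) * g (p.1, p.2.2)) := rfl
    rw [this]
    refine Measurable.indicator ?_ (measurable_snd (hE n))
    fun_prop
  have hcyl : ∀ x : SymbSpace b, ∀ k, cylinder (wordPrefix x k) = {y | (x, y) ∈ E k} := by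
    intro x k
    rw [cyl_wp]
    ext y
    change pr k y = pr k x ↔ wordPrefix x k = wordPrefix y k
    rw [wp_eq, wp_eq, List.ofFn_inj]
    exact eq_comm
  have hcm : ∀ x : SymbSpace b, ∀ k, MeasurableSet {y | (x, y) ∈ E k} := fun x k => by
    rw [← hcyl]; exact measurableSet_cyl _
  have step : ∀ ω, ∫⁻ x, g (ω, x) * ∫⁻ y in cylinder (wordPrefix x n), g (ω, y) ∂ν ∂ν
      = ∫⁻ p, F (ω, p) ∂(ν.prod ν) := by
    intro ω
    rw [lintegral_prod (fun p => F (ω, p)) (hF.comp measurable_prodMk_left).aemeasurable]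
    refine lintegral_congr fun x => ?_
    rw [← lintegral_const_mul (g (ω, x)) (f := fun y => g (ω, y)) (hgm.comp measurable_prodMk_left)]
    rw [hcyl, ← lintegral_indicator (hcm x n)]
    rfl
  simp_rw [step]
  rw [lintegral_lintegral_swap hF.aemeasurable]
  let Gd : ℕ → SymbSpace b × SymbSpace b → ℝ≥0∞ := fun k p =>
    (if wordPrefix p.1 k = wordPrefix p.2 k ∧
      ν (cylinder (wordPrefix p.1 k)) ≤ ENNReal.ofReal (Real.exp (-(k * t))) then 1 else 0)
  have hGd : ∀ k, Measurable (Gd k) := by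
    intro k
    refine Measurable.ite ?_ measurable_const measurable_const
    exact (hE k).inter (measurable_fst (meas_wp_set
      (fun w => ν (cylinder w) ≤ ENNReal.ofReal (Real.exp (-(k * t)))) k))
  calc _ ≤ ∫⁻ p, ∑ k ∈ Finset.Icc n m, ENNReal.ofReal (Real.exp (k * a)) * Gd k p ∂(ν.prod ν) := by
        refine lintegral_mono fun p => ?_
        by_cases hp : p ∈ E n
        · have : ∀ ω, F (ω, p) = g (ω, p.1) * g (ω, p.2) := fun ω => Set.indicator_of_mem hp _
          simp_rw [this]
          exact second_moment_pt hM1 ν a t N m n hNn hnm p.1 p.2 hp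
        · have : ∀ ω, F (ω, p) = 0 := fun ω => Set.indicator_of_notMem hp _
          simp [this]
    _ = ∑ k ∈ Finset.Icc n m, ENNReal.ofReal (Real.exp (k * a)) * ∫⁻ p, Gd k p ∂(ν.prod ν) := by
        rw [lintegral_finsetSum _ fun k _ => (hGd k).const_mul _]
        exact Finset.sum_congr rfl fun k _ => lintegral_const_mul _ (hGd k)
    _ ≤ _ := by
        refine Finset.sum_le_sum fun k _ => ?_
        gcongr
        rw [lintegral_prod _ (hGd k).aemeasurable]
        calc _ ≤ ∫⁻ x, ENNReal.ofReal (Real.exp (-(k * t))) ∂ν := by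
              refine lintegral_mono fun x => ?_
              by_cases hx : ν (cylinder (wordPrefix x k)) ≤ ENNReal.ofReal (Real.exp (-(k * t)))
              · refine le_trans (le_of_eq ?_) hx
                rw [hcyl, ← lintegral_indicator_one (hcm x k)]
                refine lintegral_congr fun y => ?_
                simp only [Gd, Set.indicator_apply, hx, and_true]
                rfl
              · simp [Gd, hx]
          _ = _ := by simp

lemma bad_mass (hM1 : CascadeM1 P X X₀) (ν : Measure (SymbSpace b)) [IsProbabilityMeasure ν]
    (hfin : entropyX P X₀ ≠ ∞) (ε : ℝ) (hε : 0 < ε) (t : ℝ)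
    (hν : ∀ᵐ x ∂ν, ∀ᶠ n : ℕ in atTop,
      ν (cylinder (wordPrefix x n)) ≤ ENNReal.ofReal (Real.exp (-(n * t))))
    (δ : ℝ≥0∞) (hδ : δ ≠ 0) :
    ∃ N, ∀ m, ∫⁻ ω, ∫⁻ x in {x | (ω, x) ∈ badSet X ν ((entropyX P X₀).toReal + ε) t N m},
      QQ X m ω x ∂ν ∂P ≤ δ + δ := by
  set h := (entropyX P X₀).toReal
  obtain ⟨N₁, hN₁⟩ := dev_lemma hM1 hfin ε hε δ hδ
  obtain ⟨N₂, hN₂⟩ := tail_small ν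
    (fun n => {x | ENNReal.ofReal (Real.exp (-(n * t))) < ν (cylinder (wordPrefix x n))})
    (fun n => meas_wp_set (fun w => ENNReal.ofReal (Real.exp (-(n * t))) < ν (cylinder w)) n)
    (by filter_upwards [hν] with x hx
        filter_upwards [hx] with n hn
        exact not_lt.2 hn) δ hδ
  refine ⟨max N₁ N₂, fun m => ?_⟩
  let A : Set (Ω × SymbSpace b) :=
    {p | ∃ k, N₁ ≤ k ∧ k ≤ m ∧ devW X h ε k p.1 (wordPrefix p.2 k)}
  let B : Set (SymbSpace b) := {z | ∃ n, N₂ ≤ n ∧ z ∈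
    {x | ENNReal.ofReal (Real.exp (-((n : ℕ) * t))) < ν (cylinder (wordPrefix x n))}}
  have hA : MeasurableSet A := measSet_union (devW X h ε) (fun n w => meas_devW hM1 _ _ n w) N₁ m
  calc _ ≤ ∫⁻ ω, (∫⁻ x in {x | (ω, x) ∈ A}, QQ X m ω x ∂ν + ∫⁻ x in B, QQ X m ω x ∂ν) ∂P := by
        refine lintegral_mono fun ω => ?_
        refine le_trans (lintegral_mono_set ?_) (lintegral_union_le _ _ _)
        rintro x ⟨k, h1, h2, h3 | h3⟩
        · exact Or.inl ⟨k, (le_max_left _ _).trans h1, h2, Or.inl h3⟩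
        · exact Or.inr ⟨k, (le_max_right _ _).trans h1, h3⟩
    _ = ∫⁻ ω, ∫⁻ x in {x | (ω, x) ∈ A}, QQ X m ω x ∂ν ∂P + ∫⁻ ω, ∫⁻ x in B, QQ X m ω x ∂ν ∂P :=
        lintegral_add_left (meas_setlint hM1 ν A hA m) _
    _ ≤ δ + δ := by
        refine add_le_add ?_ ?_
        · rw [swap_setlint hM1 ν A hA m]
          calc _ ≤ ∫⁻ x, δ ∂ν := lintegral_mono fun x => hN₁ x m
            _ = δ := by simp
        · rw [lint_lint_QQ hM1]
          rw [Measure.restrict_apply_univ]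
          exact hN₂

open Classical in
lemma case_bound (ν : Measure (SymbSpace b)) (c ε : ℝ) (n : ℕ) (f g : SymbSpace b → ℝ≥0∞)
    (hg : Measurable g) :
    ∫⁻ x in {x | ENNReal.ofReal (Real.exp (-(n * c))) < ∫⁻ y in cylinder (wordPrefix x n), f y ∂ν},
        g x ∂ν
      ≤ ENNReal.ofReal (1 * Real.exp (-(n * ε))) * ∫⁻ x, f x ∂ν
        + ENNReal.ofReal (Real.exp (n * (c + ε))) *
          ∫⁻ x, g x * ∫⁻ y in cylinder (wordPrefix x n), g y ∂ν ∂ν := by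
  set s := ENNReal.ofReal (1 * Real.exp (-(n * ε))) with hs
  let S : List (Fin b) → Prop := fun w => ∫⁻ y in cylinder w, g y ∂ν ≤ s * ∫⁻ y in cylinder w, f y ∂ν
  let T : List (Fin b) → Prop := fun w => 1 ≤ ENNReal.ofReal (Real.exp (n * (c + ε))) *
    ∫⁻ y in cylinder w, g y ∂ν
  have hsub : {x : SymbSpace b | ENNReal.ofReal (Real.exp (-(n * c))) <
      ∫⁻ y in cylinder (wordPrefix x n), f y ∂ν}
      ⊆ {x | S (wordPrefix x n)} ∪ {x | T (wordPrefix x n)} := by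
    intro x hx
    have hx' : ENNReal.ofReal (Real.exp (-(n * c))) <
      ∫⁻ y in cylinder (wordPrefix x n), f y ∂ν := hx
    by_cases hS : S (wordPrefix x n)
    · exact Or.inl hS
    · right
      have h1 := not_le.1 hS
      refine (show 1 ≤ ENNReal.ofReal (Real.exp (n * (c + ε))) *
        ∫⁻ y in cylinder (wordPrefix x n), g y ∂ν from ?_)
      calc (1 : ℝ≥0∞) = ENNReal.ofReal (Real.exp (n * (c + ε))) *
            (s * ENNReal.ofReal (Real.exp (-(n * c)))) := by
            rw [hs, ← ENNReal.ofReal_mul (by positivity), ← ENNReal.ofReal_mul (by positivity),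
              one_mul, ← Real.exp_add, ← Real.exp_add]
            ring_nf
            simp
        _ ≤ _ := by
            gcongr
            exact le_trans (by gcongr) h1.le
  refine (lintegral_mono_set hsub).trans ((lintegral_union_le _ _ _).trans (add_le_add ?_ ?_))
  · rw [split_lint ν S n, split_lint_univ ν n f, Finset.mul_sum]
    refine (Finset.sum_le_sum (g := fun u : Fin n → Fin b =>
      s * ∫⁻ x in cylinder (List.ofFn u), f x ∂ν) ?_).trans
      (Finset.sum_le_sum_of_subset (Finset.subset_univ _))
    intro u hu
    exact ((@Finset.mem_filter _ _ (_) _ _).1 hu).2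
  · have hm : Measurable (fun x : SymbSpace b => ∫⁻ y in cylinder (wordPrefix x n), g y ∂ν) := by
      have : (fun x : SymbSpace b => ∫⁻ y in cylinder (wordPrefix x n), g y ∂ν)
        = (fun u => ∫⁻ y in cylinder (List.ofFn u), g y ∂ν) ∘ pr n := rfl
      rw [this]
      exact (measurable_of_countable _).comp (measurable_pr n)
    rw [← lintegral_const_mul _ (f := fun x => g x * ∫⁻ y in cylinder (wordPrefix x n), g y ∂ν)
      (hg.mul hm)]
    refine le_trans (setLIntegral_mono' (g := fun x => ENNReal.ofReal (Real.exp (n * (c + ε))) *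
      (g x * ∫⁻ y in cylinder (wordPrefix x n), g y ∂ν)) (meas_wp_set T n) ?_)
      (setLIntegral_le_lintegral _ _)
    intro x hx
    have hx' : T (wordPrefix x n) := hx
    calc g x = g x * 1 := by rw [mul_one]
      _ ≤ g x * (ENNReal.ofReal (Real.exp (n * (c + ε))) *
        ∫⁻ y in cylinder (wordPrefix x n), g y ∂ν) := by gcongr
      _ = _ := by ring

lemma geom_bound (c ε a t : ℝ) (hat : a - t = -(c + 2 * ε)) (n m : ℕ) :
    ENNReal.ofReal (Real.exp (n * (c + ε))) * ∑ k ∈ Finset.Icc n m,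
        ENNReal.ofReal (Real.exp (k * a)) * ENNReal.ofReal (Real.exp (-(k * t)))
      ≤ ENNReal.ofReal (1 * Real.exp (-(n * ε))) *
        ∑' j : ℕ, ENNReal.ofReal (1 * Real.exp (-(j * (c + 2 * ε)))) := by
  calc _ = ENNReal.ofReal (1 * Real.exp (-(n * ε))) * ∑ k ∈ Finset.Icc n m,
        ENNReal.ofReal (1 * Real.exp (-(((k - n : ℕ) : ℝ) * (c + 2 * ε)))) := by
        rw [Finset.mul_sum, Finset.mul_sum]
        refine Finset.sum_congr rfl fun k hk => ?_
        rw [← ENNReal.ofReal_mul (by positivity), ← ENNReal.ofReal_mul (by positivity),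
          ← ENNReal.ofReal_mul (by positivity), one_mul, one_mul, ← Real.exp_add, ← Real.exp_add,
          ← Real.exp_add, Nat.cast_sub (Finset.mem_Icc.1 hk).1]
        congr 2
        have : a = t - (c + 2 * ε) := by linarith
        rw [this]; ring
    _ ≤ _ := by
        gcongr
        rw [← Finset.sum_image (f := fun j : ℕ => ENNReal.ofReal (1 * Real.exp (-(j * (c + 2 * ε)))))
          (g := fun k => k - n) (s := Finset.Icc n m)]
        · exact ENNReal.sum_le_tsum _
        · intro i hi j hj hij
          have h1 := Finset.mem_Icc.1 hi
          have h2 := Finset.mem_Icc.1 hj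
          have h3 : i - n = j - n := hij
          omega

lemma upper_mass (hM1 : CascadeM1 P X X₀) (ν : Measure (SymbSpace b)) [IsProbabilityMeasure ν]
    (Qν : Ω → Measure (SymbSpace b))
    (hQν : ∀ᵐ ω ∂P, ∀ w : List (Fin b),
      Tendsto (fun n => ∫⁻ x in cylinder w, QQ X n ω x ∂ν)
        atTop (nhds (Qν ω (cylinder w))))
    (hfin : entropyX P X₀ ≠ ∞) (c ε : ℝ) (hc : 0 ≤ c) (hε : 0 < ε)
    (hν : ∀ᵐ x ∂ν, ∀ᶠ n : ℕ in atTop, ν (cylinder (wordPrefix x n)) ≤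
      ENNReal.ofReal (Real.exp (-(n * (c + (entropyX P X₀).toReal + 3 * ε))))) :
    ∀ᵐ ω ∂P, ∀ᵐ x ∂(Qν ω), ∀ᶠ n : ℕ in atTop,
      ¬ (ENNReal.ofReal (Real.exp (-(n * c))) < Qν ω (cylinder (wordPrefix x n))) := by
  refine null_lemma hM1 ν Qν hQν
    (fun m n ω w => ENNReal.ofReal (Real.exp (-(n * c))) < ∫⁻ x in cylinder w, QQ X m ω x ∂ν)
    (fun n ω w => ENNReal.ofReal (Real.exp (-(n * c))) < Qν ω (cylinder w)) ?_ ?_ ?_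
  · intro m n w
    exact measurableSet_lt measurable_const (meas_cylint hM1 ν m w)
  · filter_upwards [hQν] with ω hω n w h
    exact (hω w).eventually_const_lt h
  intro δ hδ
  set h := (entropyX P X₀).toReal with hh
  set t := c + h + 3 * ε with ht
  set a := h + ε with ha
  have hδ3 : δ / 3 ≠ 0 := ENNReal.div_ne_zero.2 ⟨hδ, by simp⟩
  obtain ⟨N, hN⟩ := bad_mass hM1 ν hfin ε hε t hν (δ / 3) hδ3
  set C := ∑' j : ℕ, ENNReal.ofReal (1 * Real.exp (-(j * (c + 2 * ε)))) with hC
  have hCfin : C ≠ ∞ := tsum_exp 1 _ zero_le_one (by positivity)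
  obtain ⟨M, hNM, hM⟩ := tsum_tail
    (fun n : ℕ => ENNReal.ofReal (1 * Real.exp (-(n * ε))) * (1 + C))
    (by rw [ENNReal.tsum_mul_right]
        exact ENNReal.mul_ne_top (tsum_exp 1 ε zero_le_one hε) (by simp [hCfin])) (δ / 3) hδ3 N
  refine ⟨M, fun L => ?_⟩
  filter_upwards [eventually_ge_atTop L] with m hm
  set B := badSet X ν a t N m with hB
  have hBm : MeasurableSet B := meas_badSet hM1 ν a t N m
  set g := gg X ν a t N m with hg
  have hgm : Measurable g := meas_gg hM1 ν a t N m
  have hgω : ∀ ω, Measurable (fun x => g (ω, x)) := fun ω => hgm.comp measurable_prodMk_left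
  have hmm : ∀ n : ℕ, Measurable (fun ω => ∫⁻ x, g (ω, x) *
        ∫⁻ y in cylinder (wordPrefix x n), g (ω, y) ∂ν ∂ν) := by
    intro n
    have h1 : Measurable (fun p : Ω × SymbSpace b =>
        ∫⁻ y in cylinder (wordPrefix p.2 n), g (p.1, y) ∂ν) :=
      meas_joint (fun ω w => ∫⁻ y in cylinder w, g (ω, y) ∂ν)
        (fun w => hgm.lintegral_prod_right') n
    exact (hgm.mul h1).lintegral_prod_right'
  have hQm : Measurable (fun ω => ∫⁻ x, QQ X m ω x ∂ν) := (meas_QQ hM1 m).lintegral_prod_right'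
  calc _ ≤ ∫⁻ ω, (∫⁻ x in {x | (ω, x) ∈ B}, QQ X m ω x ∂ν + ∑ n ∈ Finset.Icc M L,
        (ENNReal.ofReal (1 * Real.exp (-(n * ε))) * ∫⁻ x, QQ X m ω x ∂ν
        + ENNReal.ofReal (Real.exp (n * (c + ε))) *
          ∫⁻ x, g (ω, x) * ∫⁻ y in cylinder (wordPrefix x n), g (ω, y) ∂ν ∂ν)) ∂P := by
        refine lintegral_mono fun ω => ?_
        have hBω : MeasurableSet {x | (ω, x) ∈ B} := measurable_prodMk_left hBm
        have hdec : ∀ x, QQ X m ω x = {x | (ω, x) ∈ B}.indicator (fun x => QQ X m ω x) x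
            + g (ω, x) := by
          intro x
          by_cases hx : (ω, x) ∈ B
          · have h1 : g (ω, x) = 0 := Set.indicator_of_notMem (show (ω, x) ∉ Bᶜ from fun hc => hc hx) _
            rw [h1, Set.indicator_of_mem (show x ∈ {x | (ω, x) ∈ B} from hx), add_zero]
          · have h1 : g (ω, x) = QQ X m ω x := Set.indicator_of_mem (show (ω, x) ∈ Bᶜ from hx) _
            rw [h1, Set.indicator_of_notMem (show x ∉ {x | (ω, x) ∈ B} from hx), zero_add]
        simp only
        rw [lintegral_congr hdec, lintegral_add_right _ (hgω ω)]
        refine add_le_add ?_ ?_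
        · exact (setLIntegral_le_lintegral _ _).trans (lintegral_indicator hBω _).le
        · refine (union_le ν (fun n w => ENNReal.ofReal (Real.exp (-(n * c))) <
            ∫⁻ x in cylinder w, QQ X m ω x ∂ν) M L _).trans ?_
          exact Finset.sum_le_sum fun n _ => case_bound ν c ε n _ _ (hgω ω)
    _ = ∫⁻ ω, ∫⁻ x in {x | (ω, x) ∈ B}, QQ X m ω x ∂ν ∂P + ∑ n ∈ Finset.Icc M L,
        (ENNReal.ofReal (1 * Real.exp (-(n * ε)))
        + ENNReal.ofReal (Real.exp (n * (c + ε))) *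
          ∫⁻ ω, ∫⁻ x, g (ω, x) * ∫⁻ y in cylinder (wordPrefix x n), g (ω, y) ∂ν ∂ν ∂P) := by
        rw [lintegral_add_left (meas_setlint hM1 ν B hBm m), lintegral_finsetSum]
        · congr 1
          refine Finset.sum_congr rfl fun n _ => ?_
          rw [lintegral_add_left (hQm.const_mul _), lintegral_const_mul _ hQm,
            lintegral_const_mul _ (hmm n), lint_lint_QQ hM1]
          simp
        · exact fun n _ => (hQm.const_mul _).add ((hmm n).const_mul _)
    _ ≤ (δ / 3 + δ / 3) + ∑ n ∈ Finset.Icc M L,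
        ENNReal.ofReal (1 * Real.exp (-(n * ε))) * (1 + C) := by
        refine add_le_add (hN m) (Finset.sum_le_sum fun n hn => ?_)
        have hn' := Finset.mem_Icc.1 hn
        rw [mul_add (ENNReal.ofReal (1 * Real.exp (-(n * ε)))) 1 C, mul_one (ENNReal.ofReal (1 * Real.exp (-(n * ε))))]
        refine add_le_add le_rfl ?_
        refine le_trans ?_ (geom_bound c ε a t (by rw [ha, ht]; ring) n m)
        gcongr
        exact second_moment hM1 ν a t N m n (hNM.trans hn'.1) (hn'.2.trans hm)
    _ ≤ (δ / 3 + δ / 3) + δ / 3 := by gcongr; exact hM L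
    _ = δ := ENNReal.add_thirds δ

lemma pos_ae (μ : Measure (SymbSpace b)) :
    ∀ᵐ x ∂μ, ∀ n, μ (cylinder (wordPrefix x n)) ≠ 0 := by
  rw [ae_all_iff]
  intro n
  have : {x : SymbSpace b | ¬ μ (cylinder (wordPrefix x n)) ≠ 0}
      ⊆ ⋃ u ∈ {u : Fin n → Fin b | μ (cylinder (List.ofFn u)) = 0}, cylinder (List.ofFn u) := by
    intro x hx
    have hx' : μ (cylinder (wordPrefix x n)) = 0 := not_not.1 hx
    refine Set.mem_biUnion (x := pr n x) hx' ?_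
    rw [cyl_ofFn]
    rfl
  refine measure_mono_null this ?_
  exact (measure_biUnion_null_iff (Set.to_countable _)).2 fun u hu => hu

lemma low_of (μ : Measure (SymbSpace b)) (x : SymbSpace b) (c : ℝ)
    (hpos : ∀ n, μ (cylinder (wordPrefix x n)) ≠ 0)
    (h : ∀ᶠ n : ℕ in atTop, μ (cylinder (wordPrefix x n)) ≤ ENNReal.ofReal (Real.exp (-(n * c)))) :
    ENNReal.ofReal c ≤ lowerLocalDim μ x := by
  refine le_liminf_of_le (by isBoundedDefault) ?_
  filter_upwards [h, eventually_ge_atTop 1] with n hn h1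
  refine ENNReal.ofReal_le_ofReal ?_
  have hn0 : (0 : ℝ) < n := by exact_mod_cast h1
  have hfin : μ (cylinder (wordPrefix x n)) ≠ ∞ := ne_top_of_le_ne_top ENNReal.ofReal_ne_top hn
  have hp := ENNReal.toReal_pos (hpos n) hfin
  have hle : (μ (cylinder (wordPrefix x n))).toReal ≤ Real.exp (-(n * c)) :=
    ENNReal.toReal_le_of_le_ofReal (Real.exp_pos _).le hn
  have := (Real.log_le_iff_le_exp hp).2 hle
  rw [le_div_iff₀ hn0]
  linarith

lemma of_low (μ : Measure (SymbSpace b)) [IsFiniteMeasure μ] (x : SymbSpace b) (t : ℝ) (ht : 0 ≤ t)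
    (h : ENNReal.ofReal t < lowerLocalDim μ x) :
    ∀ᶠ n : ℕ in atTop, μ (cylinder (wordPrefix x n)) ≤ ENNReal.ofReal (Real.exp (-(n * t))) := by
  have := eventually_lt_of_lt_liminf h (by isBoundedDefault)
  filter_upwards [this, eventually_ge_atTop 1] with n hn h1
  have hn0 : (0 : ℝ) < n := by exact_mod_cast h1
  have h2 := (ENNReal.ofReal_lt_ofReal_iff'.1 hn).1
  rw [lt_div_iff₀ hn0] at h2
  have hfin : μ (cylinder (wordPrefix x n)) ≠ ∞ := measure_ne_top _ _
  refine (ENNReal.le_ofReal_iff_toReal_le hfin (Real.exp_pos _).le).2 ?_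
  rcases (ENNReal.toReal_nonneg (a := μ (cylinder (wordPrefix x n)))).eq_or_lt with h0 | h0
  · rw [← h0]; exact (Real.exp_pos _).le
  · rw [← Real.log_le_iff_le_exp h0]
    linarith

lemma up_of (μ : Measure (SymbSpace b)) (x : SymbSpace b) (q : ℝ)
    (h : ∀ᶠ n : ℕ in atTop, ENNReal.ofReal (Real.exp (-(n * q))) ≤ μ (cylinder (wordPrefix x n))) :
    upperLocalDim μ x ≤ ENNReal.ofReal q := by
  refine limsup_le_of_le (by isBoundedDefault) ?_
  filter_upwards [h, eventually_ge_atTop 1] with n hn h1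
  have hn0 : (0 : ℝ) < n := by exact_mod_cast h1
  by_cases hfin : μ (cylinder (wordPrefix x n)) = ∞
  · rw [hfin]; simp
  refine ENNReal.ofReal_le_ofReal ?_
  have hle : Real.exp (-(n * q)) ≤ (μ (cylinder (wordPrefix x n))).toReal :=
    (ENNReal.ofReal_le_iff_le_toReal hfin).1 hn
  have := (Real.le_log_iff_exp_le ((Real.exp_pos _).trans_le hle)).2 hle
  rw [div_le_iff₀ hn0]
  linarith

lemma of_up (μ : Measure (SymbSpace b)) [IsFiniteMeasure μ] (x : SymbSpace b) (t : ℝ)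
    (hpos : ∀ n, μ (cylinder (wordPrefix x n)) ≠ 0)
    (h : upperLocalDim μ x < ENNReal.ofReal t) :
    ∀ᶠ n : ℕ in atTop, ENNReal.ofReal (Real.exp (-(n * t))) ≤ μ (cylinder (wordPrefix x n)) := by
  have := eventually_lt_of_limsup_lt h (by isBoundedDefault)
  filter_upwards [this, eventually_ge_atTop 1] with n hn h1
  have hn0 : (0 : ℝ) < n := by exact_mod_cast h1
  have h2 := (ENNReal.ofReal_lt_ofReal_iff'.1 hn).1
  rw [div_lt_iff₀ hn0] at h2
  have hfin : μ (cylinder (wordPrefix x n)) ≠ ∞ := measure_ne_top _ _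
  refine (ENNReal.ofReal_le_iff_le_toReal hfin).2 ?_
  have hp := ENNReal.toReal_pos (hpos n) hfin
  rw [← Real.le_log_iff_exp_le hp]
  linarith

lemma lower_bound (hM1 : CascadeM1 P X X₀) (ν : Measure (SymbSpace b)) [IsProbabilityMeasure ν]
    (Qν : Ω → Measure (SymbSpace b))
    (hQν : ∀ᵐ ω ∂P, ∀ w : List (Fin b),
      Tendsto (fun n => ∫⁻ x in cylinder w, QQ X n ω x ∂ν)
        atTop (nhds (Qν ω (cylinder w))))
    (hfin : entropyX P X₀ ≠ ∞) :
    ∀ᵐ ω ∂P, lowerHausdorffDim ν - entropyX P X₀ ≤ lowerHausdorffDim (Qν ω) := by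
  set h := (entropyX P X₀).toReal with hh
  have hH : entropyX P X₀ = ENNReal.ofReal h := (ENNReal.ofReal_toReal hfin).symm
  have hh0 : 0 ≤ h := ENNReal.toReal_nonneg
  have key : ∀ᵐ ω ∂P, ∀ q : ℚ, 0 ≤ q →
      ENNReal.ofReal (q : ℝ) < lowerHausdorffDim ν - entropyX P X₀ →
      ENNReal.ofReal (q : ℝ) ≤ lowerHausdorffDim (Qν ω) := by
    rw [ae_all_iff]
    intro q
    by_cases hq : 0 ≤ q
    swap
    · exact ae_of_all _ fun ω h1 => absurd h1 hq
    by_cases hlt : ENNReal.ofReal (q : ℝ) < lowerHausdorffDim ν - entropyX P X₀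
    swap
    · exact ae_of_all _ fun ω _ h1 => absurd h1 hlt
    have hq' : (0 : ℝ) ≤ q := by exact_mod_cast hq
    have hlt2 := lt_tsub_iff_right.1 hlt
    rw [hH, ← ENNReal.ofReal_add hq' hh0] at hlt2
    obtain ⟨t, ht0, ht1, ht2⟩ := ENNReal.lt_iff_exists_real_btwn.1 hlt2
    have ht3 := (ENNReal.ofReal_lt_ofReal_iff'.1 ht1).1
    have := upper_mass hM1 ν Qν hQν hfin q ((t - q - h) / 3) hq' (by linarith) (by
      have e : (q : ℝ) + (entropyX P X₀).toReal + 3 * ((t - q - h) / 3) = t := by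
        rw [← hh]; ring
      rw [e]
      have h1 : ∀ᵐ x ∂ν, lowerHausdorffDim ν ≤ lowerLocalDim ν x := ae_essInf_le
      filter_upwards [h1] with x hx
      exact of_low ν x t ht0 (ht2.trans_le hx))
    filter_upwards [this] with ω hω _ _
    refine le_essInf_of_ae_le _ ?_
    filter_upwards [hω, pos_ae (Qν ω)] with x hx hp
    refine low_of _ x _ hp ?_
    filter_upwards [hx] with n hn
    exact not_lt.1 hn
  filter_upwards [key] with ω hω
  by_contra hc
  obtain ⟨q, hq0, hq1, hq2⟩ := ENNReal.lt_iff_exists_rat_btwn.1 (not_le.1 hc)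
  exact absurd (hω q hq0 hq2) (not_le.2 hq1)

lemma upper_bound (hM1 : CascadeM1 P X X₀) (ν : Measure (SymbSpace b)) [IsProbabilityMeasure ν]
    (Qν : Ω → Measure (SymbSpace b))
    (hQν : ∀ᵐ ω ∂P, ∀ w : List (Fin b),
      Tendsto (fun n => ∫⁻ x in cylinder w, QQ X n ω x ∂ν)
        atTop (nhds (Qν ω (cylinder w))))
    (hfin : entropyX P X₀ ≠ ∞) :
    ∀ᵐ ω ∂P, upperPackingDim (Qν ω) ≤ upperPackingDim ν - entropyX P X₀ := by
  set h := (entropyX P X₀).toReal with hh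
  have hH : entropyX P X₀ = ENNReal.ofReal h := (ENNReal.ofReal_toReal hfin).symm
  have hh0 : 0 ≤ h := ENNReal.toReal_nonneg
  have key : ∀ᵐ ω ∂P, ∀ q : ℚ, 0 ≤ q →
      upperPackingDim ν - entropyX P X₀ < ENNReal.ofReal (q : ℝ) →
      upperPackingDim (Qν ω) ≤ ENNReal.ofReal (q : ℝ) := by
    rw [ae_all_iff]
    intro q
    by_cases hq : 0 ≤ q
    swap
    · exact ae_of_all _ fun ω h1 => absurd h1 hq
    by_cases hlt : upperPackingDim ν - entropyX P X₀ < ENNReal.ofReal (q : ℝ)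
    swap
    · exact ae_of_all _ fun ω _ h1 => absurd h1 hlt
    have hq' : (0 : ℝ) ≤ q := by exact_mod_cast hq
    have hlt2 : upperPackingDim ν < ENNReal.ofReal (q + h) := by
      rw [ENNReal.ofReal_add hq' hh0, ← hH]
      exact lt_of_le_of_lt le_tsub_add (ENNReal.add_lt_add_right hfin hlt)
    obtain ⟨t, ht0, ht1, ht2⟩ := ENNReal.lt_iff_exists_real_btwn.1 hlt2
    have ht3 := (ENNReal.ofReal_lt_ofReal_iff'.1 ht2).1
    set ε := (q + h - t) / 2 with hε
    have hε0 : 0 < ε := by rw [hε]; linarith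
    have hA := transfer hM1 ν Qν hQν
      (fun n w => ν (cylinder w) < ENNReal.ofReal (Real.exp (-(n * t)))) (by
        have h1 : ∀ᵐ x ∂ν, upperLocalDim ν x ≤ upperPackingDim ν := ae_le_essSup
        filter_upwards [h1, pos_ae ν] with x hx hp
        filter_upwards [of_up ν x t hp (hx.trans_lt ht1)] with n hn
        exact not_lt.2 hn)
    have hB := lower_mass hM1 ν Qν hQν ε hε0
    have hC := dev_ae hM1 ν Qν hQν hfin ε hε0
    filter_upwards [hA, hB, hC] with ω hAω hBω hCω _ _
    refine essSup_le_of_ae_le _ ?_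
    filter_upwards [hAω, hBω, hCω] with x hA hB hC
    refine up_of _ x _ ?_
    filter_upwards [hA, hB, hC] with n hA hB hC
    have hA' := not_lt.1 hA
    have hB' := not_lt.1 hB
    have hC' : Real.exp (n * (h - ε)) ≤ cascadeY X (wordPrefix x n) ω :=
      not_lt.1 fun h' => hC (Or.inr h')
    refine le_trans ?_ hB'
    calc ENNReal.ofReal (Real.exp (-(n * q)))
        = ENNReal.ofReal (Real.exp (-(n * ε))) * (ENNReal.ofReal (Real.exp (n * (h - ε))) *
          ENNReal.ofReal (Real.exp (-(n * t)))) := by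
          rw [← ENNReal.ofReal_mul (by positivity), ← ENNReal.ofReal_mul (by positivity),
            ← Real.exp_add, ← Real.exp_add]
          congr 2
          rw [hε]; ring
      _ ≤ _ := by gcongr
  filter_upwards [key] with ω hω
  by_contra hc
  obtain ⟨q, hq0, hq1, hq2⟩ := ENNReal.lt_iff_exists_rat_btwn.1 (not_le.1 hc)
  exact absurd (hω q hq0 hq1) (not_le.2 hq2)

lemma middle_bound (μ : Measure (SymbSpace b)) (hμ : μ ≠ 0) :
    lowerHausdorffDim μ ≤ upperPackingDim μ := by
  have : (ae μ).NeBot := ae_neBot.2 hμ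
  have h1 : ∀ᵐ x ∂μ, lowerHausdorffDim μ ≤ lowerLocalDim μ x := ae_essInf_le
  have h2 : ∀ᵐ x ∂μ, upperLocalDim μ x ≤ upperPackingDim μ := ae_le_essSup
  obtain ⟨x, hx1, hx2⟩ := (h1.and h2).exists
  exact hx1.trans (le_trans (liminf_le_limsup) hx2)


end

/-- **Theorem (dimension bounds for the limit measure).** Let `Q` be a Mandelbrot
multiplicative cascade (assumption (M1)) acting on a Borel probability measure `ν` on `Σ`,
and let `Q·ν` denote the almost-sure weak limit of the measures with density `Q_n` with
respect to `ν` (characterised by convergence on every cylinder). If for `ν`-almost every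
`x` the lower local dimension of `ν` at `x` is strictly greater than `h_X`, then with
probability 1, conditional on `Q·ν ≠ 0`,
`dim̲_H(ν) − h_X ≤ dim̲_H(Q·ν) ≤ dim̄_P(Q·ν) ≤ dim̄_P(ν) − h_X`. -/
theorem dimension_bounds_of_limit_cascade_measure
    {b : ℕ} (hb : 2 ≤ b)
    {Ω : Type*} [MeasurableSpace Ω] (P : Measure Ω) [IsProbabilityMeasure P]
    (X : List (Fin b) → Ω → ℝ) (X₀ : Ω → ℝ)
    (hM1 : CascadeM1 P X X₀)
    (ν : Measure (SymbSpace b)) [IsProbabilityMeasure ν]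
    (Qν : Ω → Measure (SymbSpace b))
    (hQν : ∀ᵐ ω ∂P, ∀ w : List (Fin b),
      Tendsto (fun n => ∫⁻ x in cylinder w, ENNReal.ofReal (cascadeY X (wordPrefix x n) ω) ∂ν)
        atTop (nhds (Qν ω (cylinder w))))
    (hdim : ∀ᵐ x ∂ν, entropyX P X₀ < lowerLocalDim ν x) :
    ∀ᵐ ω ∂P, Qν ω ≠ 0 →
      lowerHausdorffDim ν - entropyX P X₀ ≤ lowerHausdorffDim (Qν ω) ∧
      lowerHausdorffDim (Qν ω) ≤ upperPackingDim (Qν ω) ∧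
      upperPackingDim (Qν ω) ≤ upperPackingDim ν - entropyX P X₀ := by
  have hfin : entropyX P X₀ ≠ ∞ := by
    obtain ⟨x, hx⟩ := hdim.exists
    exact ne_top_of_lt hx
  filter_upwards [lower_bound hM1 ν Qν hQν hfin, upper_bound hM1 ν Qν hQν hfin] with ω h1 h2 h0
  exact ⟨h1, middle_bound _ h0, h2⟩

end
end
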